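/- arXiv:1811.08946 — 3 statements merged into one kernel-verified Lean document; each statement's English description precedes it below -/
import Mathlib

section
/- Let k be a field, S and T totally ordered sets, and M a pointwise finite-dimensional, indecomposable persistence module over S × T such that for all x ≤ x' in S and y ≤ y' in T, with a = (x,y), b = (x,y'), c = (x',y), d = (x',y'), the sequence 0 → M_a → M_b ⊕ M_c → M_d → 0 is short exact. If (Im M^←) ∩ (Ker M^→) ≠ 0 or (Im M^↓) ∩ (Ker M^↑) ≠ 0, then M ≅ k_I for a block I of type (db), i.e., I = J_S × J_T with J_S ⊆ S and J_T ⊆ T interval ideals. -/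
namespace PMod

variable (k : Type) [Field k]

/-- A persistence module over a preordered set `P` with values in `k`-vector spaces. -/
structure PersistenceModule (P : Type) [Preorder P] where
  V : P → Type
  [addCommGroup : ∀ x, AddCommGroup (V x)]
  [module : ∀ x, Module k (V x)]
  map : ∀ {x y : P}, x ≤ y → (V x →ₗ[k] V y)
  map_refl : ∀ x : P, map (le_refl x) = LinearMap.id
  map_trans : ∀ {x y z : P} (hxy : x ≤ y) (hyz : y ≤ z),
      map (le_trans hxy hyz) = (map hyz).comp (map hxy)

attribute [instance] PersistenceModule.addCommGroup PersistenceModule.module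

variable {k}

/-- A morphism of persistence modules. -/
structure Hom {P : Type} [Preorder P] (M N : PersistenceModule k P) where
  app : ∀ x, M.V x →ₗ[k] N.V x
  natural : ∀ {x y : P} (h : x ≤ y), (N.map h).comp (app x) = (app y).comp (M.map h)

/-- A morphism of persistence modules is an isomorphism iff it is pointwise bijective. -/
def IsIsoHom {P : Type} [Preorder P] {M N : PersistenceModule k P} (f : Hom M N) : Prop :=
  ∀ x, Function.Bijective (f.app x)

/-- Two persistence modules are isomorphic if there is a pointwise bijective
morphism between them. -/
def Isomorphic {P : Type} [Preorder P] (M N : PersistenceModule k P) : Prop :=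
  ∃ f : Hom M N, IsIsoHom f

/-- The direct sum of a family of persistence modules, taken pointwise
(`Π₀` is the finitely supported product, i.e. the direct sum). -/
noncomputable def directSum {P : Type} [Preorder P] {ι : Type}
    (N : ι → PersistenceModule k P) : PersistenceModule k P where
  V x := Π₀ i, (N i).V x
  map {x y} h := DFinsupp.mapRange.linearMap (fun i => (N i).map h)
  map_refl x := by
    have h : (fun i => (N i).map (le_refl x)) =
        fun i => (LinearMap.id : (N i).V x →ₗ[k] (N i).V x) :=
      funext fun i => (N i).map_refl x
    rw [h]
    exact DFinsupp.mapRange.linearMap_id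
  map_trans {x y z} hxy hyz := by
    have h : (fun i => (N i).map (le_trans hxy hyz)) =
        fun i => ((N i).map hyz).comp ((N i).map hxy) :=
      funext fun i => (N i).map_trans hxy hyz
    rw [h]
    exact DFinsupp.mapRange.linearMap_comp _ _

/-- The binary direct sum of two persistence modules, taken pointwise. -/
def sum2 {P : Type} [Preorder P] (M N : PersistenceModule k P) : PersistenceModule k P where
  V x := M.V x × N.V x
  map h := (M.map h).prodMap (N.map h)
  map_refl x := by
    rw [M.map_refl, N.map_refl]
    exact LinearMap.prodMap_id
  map_trans hxy hyz := by
    rw [M.map_trans hxy hyz, N.map_trans hxy hyz]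
    exact (LinearMap.prodMap_comp _ _ _ _).symm

/-- The zero persistence module predicate. -/
def IsZero {P : Type} [Preorder P] (M : PersistenceModule k P) : Prop :=
  ∀ x, ∀ v : M.V x, v = 0

/-- A persistence module is indecomposable if it is nonzero and whenever it is
isomorphic to a direct sum of two modules, one of the summands is zero. -/
def Indecomposable {P : Type} [Preorder P] (M : PersistenceModule k P) : Prop :=
  ¬ IsZero M ∧ ∀ M' M'' : PersistenceModule k P,
    Isomorphic M (sum2 M' M'') → IsZero M' ∨ IsZero M''

variable (k)

/-- A subset of a preordered set is convex. -/
def IsConvex {P : Type} [Preorder P] (I : Set P) : Prop :=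
  ∀ p q r : P, p ≤ q → q ≤ r → p ∈ I → r ∈ I → q ∈ I

open Classical in
/-- The fibre of the interval module `k_I` at `x`: a copy of `k` if `x ∈ I`, else `0`. -/
noncomputable def kMod {P : Type} [Preorder P] (I : Set P) (x : P) : Submodule k k :=
  if x ∈ I then ⊤ else ⊥

/-- The canonical generator of the fibre of the interval module at a point of `I`. -/
noncomputable def kGen {P : Type} [Preorder P] {I : Set P} {x : P} (hx : x ∈ I) :
    kMod k I x :=
  ⟨1, by simp [kMod, hx]⟩

open Classical in
/-- The structure maps of the interval module. -/
noncomputable def intervalMap {P : Type} [Preorder P] (I : Set P) {x y : P} (_ : x ≤ y) :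
    kMod k I x →ₗ[k] kMod k I y where
  toFun m := if hy : y ∈ I then ⟨(m : k), by simp [kMod, hy]⟩ else 0
  map_add' a b := by
    by_cases hy : y ∈ I <;> simp [hy]
  map_smul' c a := by
    by_cases hy : y ∈ I <;> simp [hy]

theorem kMod_coe_eq_zero {P : Type} [Preorder P] {I : Set P} {x : P} (hx : x ∉ I)
    (m : kMod k I x) : (m : k) = 0 := by
  have hm := m.2
  simp only [kMod, if_neg hx, Submodule.mem_bot] at hm
  exact hm

/-- The interval module `k_I` of a convex subset `I ⊆ P`: one-dimensional with
identity structure maps on `I`, and zero outside of `I`. -/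
noncomputable def intervalModule {P : Type} [Preorder P] (I : Set P) (hI : IsConvex I) :
    PersistenceModule k P where
  V x := kMod k I x
  map h := intervalMap k I h
  map_refl x := by
    ext m
    by_cases hx : x ∈ I
    · simp [intervalMap, hx]
    · simp [intervalMap, hx, kMod_coe_eq_zero k hx m]
  map_trans {x y z} hxy hyz := by
    ext m
    by_cases hz : z ∈ I
    · by_cases hy : y ∈ I
      · simp [intervalMap, hz, hy]
      · have hx : x ∉ I := fun hx => hy (hI x y z hxy hyz hx hz)
        simp [intervalMap, hz, hy, kMod_coe_eq_zero k hx m]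
    · by_cases hy : y ∈ I <;> simp [intervalMap, hz, hy]

/-- The constant persistence module `k_P` with value `k` everywhere. -/
def constModule (P : Type) [Preorder P] : PersistenceModule k P where
  V _ := k
  map _ := LinearMap.id
  map_refl _ := rfl
  map_trans _ _ := rfl

variable {k}

/-- Connectedness of a subset of a preordered set: any two points are joined by
a finite zigzag of comparable points inside the subset. -/
def IsConn {P : Type} [Preorder P] (I : Set P) : Prop :=
  ∀ p ∈ I, ∀ q ∈ I, ∃ (n : ℕ) (r : ℕ → P), r 0 = p ∧ r n = q ∧ (∀ i ≤ n, r i ∈ I) ∧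
    ∀ i < n, r i ≤ r (i + 1) ∨ r (i + 1) ≤ r i

/-- An interval in a poset: a nonempty convex connected subset. -/
def IsInterval {P : Type} [Preorder P] (I : Set P) : Prop :=
  I.Nonempty ∧ IsConvex I ∧ IsConn I

/-- An ideal: a subset closed under going down. -/
def IsIdeal {P : Type} [Preorder P] (I : Set P) : Prop :=
  ∀ p q : P, p ≤ q → q ∈ I → p ∈ I

/-- A filter: a subset closed under going up. -/
def IsFilter {P : Type} [Preorder P] (I : Set P) : Prop :=
  ∀ p q : P, p ≤ q → p ∈ I → q ∈ I

/-- An interval in a totally ordered set: a nonempty convex subset. -/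
def IsIntervalLin {P : Type} [Preorder P] (I : Set P) : Prop :=
  I.Nonempty ∧ IsConvex I

theorem IsConvex.prod {S T : Type} [Preorder S] [Preorder T] {A : Set S} {B : Set T}
    (hA : IsConvex A) (hB : IsConvex B) : IsConvex (A ×ˢ B) := by
  intro p q r hpq hqr hp hr
  exact ⟨hA _ _ _ hpq.1 hqr.1 hp.1 hr.1, hB _ _ _ hpq.2 hqr.2 hp.2 hr.2⟩

theorem isConvex_univ {P : Type} [Preorder P] : IsConvex (Set.univ : Set P) :=
  fun _ _ _ _ _ _ _ => trivial

/-- A block in the product of two totally ordered sets. -/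
def IsBlock {S T : Type} [LinearOrder S] [LinearOrder T] (I : Set (S × T)) : Prop :=
  I.Nonempty ∧ (
    (∃ JS JT, IsIntervalLin JS ∧ IsIdeal JS ∧ IsIntervalLin JT ∧ IsIdeal JT ∧ I = JS ×ˢ JT) ∨
    (∃ JS JT, IsIntervalLin JS ∧ IsFilter JS ∧ IsIntervalLin JT ∧ IsFilter JT ∧ I = JS ×ˢ JT) ∨
    (∃ JS, IsIntervalLin JS ∧ I = JS ×ˢ (Set.univ : Set T)) ∨
    (∃ JT, IsIntervalLin JT ∧ I = (Set.univ : Set S) ×ˢ JT))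

theorem IsBlock.isConvex {S T : Type} [LinearOrder S] [LinearOrder T] {I : Set (S × T)}
    (h : IsBlock I) : IsConvex I := by
  obtain ⟨-, h | h | h | h⟩ := h
  · obtain ⟨JS, JT, hS, -, hT, -, rfl⟩ := h
    exact hS.2.prod hT.2
  · obtain ⟨JS, JT, hS, -, hT, -, rfl⟩ := h
    exact hS.2.prod hT.2
  · obtain ⟨JS, hS, rfl⟩ := h
    exact hS.2.prod isConvex_univ
  · obtain ⟨JT, hT, rfl⟩ := h
    exact isConvex_univ.prod hT.2

/-- Convexity is inherited by preimages in a subposet. -/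
theorem IsConvex.preimage {P : Type} [Preorder P] {J : Set P} (hJ : IsConvex J)
    (Q : Set P) : IsConvex {p : Q | (p : P) ∈ J} :=
  fun p q r hpq hqr hp hr => hJ p q r hpq hqr hp hr

/-- The restriction of a persistence module to a subposet. -/
def restrict {P : Type} [Preorder P] (M : PersistenceModule k P) (Q : Set P) :
    PersistenceModule k Q where
  V q := M.V q
  map h := M.map h
  map_refl q := M.map_refl q
  map_trans hxy hyz := M.map_trans hxy hyz

/-- Middle exactness for persistence modules over a product of two totally ordered sets:
for every rectangle `a = (x,y) ≤ b = (x,y'), c = (x',y) ≤ d = (x',y')` the sequence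
`M_a → M_b ⊕ M_c → M_d` is exact at `M_b ⊕ M_c`. -/
def MiddleExact {S T : Type} [Preorder S] [Preorder T]
    (M : PersistenceModule k (S × T)) : Prop :=
  ∀ (x x' : S) (y y' : T) (hx : x ≤ x') (hy : y ≤ y')
    (mb : M.V (x, y')) (mc : M.V (x', y)),
    M.map (show (x, y') ≤ (x', y') from ⟨hx, le_refl y'⟩) mb =
      M.map (show (x', y) ≤ (x', y') from ⟨le_refl x', hy⟩) mc →
    ∃ ma : M.V (x, y),
      M.map (show (x, y) ≤ (x, y') from ⟨le_refl x, hy⟩) ma = mb ∧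
      M.map (show (x, y) ≤ (x', y) from ⟨hx, le_refl y⟩) ma = mc


theorem IsIdeal.isConvex {P : Type} [Preorder P] {I : Set P} (h : IsIdeal I) : IsConvex I :=
  fun _ q r _ hqr _ hr => h q r hqr hr

theorem IsFilter.isConvex {P : Type} [Preorder P] {I : Set P} (h : IsFilter I) : IsConvex I :=
  fun p q _ hpq _ hp _ => h p q hpq hp


/-- Convexity of the preimage of a convex subset of `T` in a subposet of `S × T`. -/
theorem IsConvex.preimageSnd {S T : Type} [Preorder S] [Preorder T] {J : Set T}
    (hJ : IsConvex J) (Q : Set (S × T)) : IsConvex {p : ↥Q | (p : S × T).2 ∈ J} :=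
  fun p q r hpq hqr hp hr =>
    hJ _ _ _ (Subtype.coe_le_coe.mpr hpq).2 (Subtype.coe_le_coe.mpr hqr).2 hp hr

end PMod

namespace PMod

/-- Short exactness of all rectangle sequences `0 → M_a → M_b ⊕ M_c → M_d → 0`. -/
def ShortExactAll {k : Type} [Field k] {S T : Type} [Preorder S] [Preorder T]
    (M : PersistenceModule k (S × T)) : Prop :=
  ∀ (x x' : S) (y y' : T) (hx : x ≤ x') (hy : y ≤ y'),
    (∀ ma : M.V (x, y),
      M.map (show (x, y) ≤ (x, y') from ⟨le_refl x, hy⟩) ma = 0 →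
      M.map (show (x, y) ≤ (x', y) from ⟨hx, le_refl y⟩) ma = 0 → ma = 0) ∧
    (∀ (mb : M.V (x, y')) (mc : M.V (x', y)),
      M.map (show (x, y') ≤ (x', y') from ⟨hx, le_refl y'⟩) mb =
        M.map (show (x', y) ≤ (x', y') from ⟨le_refl x', hy⟩) mc →
      ∃ ma : M.V (x, y),
        M.map (show (x, y) ≤ (x, y') from ⟨le_refl x, hy⟩) ma = mb ∧
        M.map (show (x, y) ≤ (x', y) from ⟨hx, le_refl y⟩) ma = mc) ∧
    (∀ md : M.V (x', y'), ∃ (mb : M.V (x, y')) (mc : M.V (x', y)),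
      M.map (show (x, y') ≤ (x', y') from ⟨hx, le_refl y'⟩) mb -
        M.map (show (x', y) ≤ (x', y') from ⟨le_refl x', hy⟩) mc = md)

/-- Membership in the submodule `(Im M^←)_p`. -/
def MemImLeft {k : Type} [Field k] {S T : Type} [Preorder S] [Preorder T]
    (M : PersistenceModule k (S × T)) (p : S × T) (m : M.V p) : Prop :=
  ∀ (q : S) (hq : q ≤ p.1), ∃ m' : M.V (q, p.2),
    M.map (show (q, p.2) ≤ p from ⟨hq, le_refl p.2⟩) m' = m

/-- Membership in the submodule `(Im M^↓)_p`. -/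
def MemImDown {k : Type} [Field k] {S T : Type} [Preorder S] [Preorder T]
    (M : PersistenceModule k (S × T)) (p : S × T) (m : M.V p) : Prop :=
  ∀ (q : T) (hq : q ≤ p.2), ∃ m' : M.V (p.1, q),
    M.map (show (p.1, q) ≤ p from ⟨le_refl p.1, hq⟩) m' = m

/-- Membership in the submodule `(Ker M^→)_p`. -/
def MemKerRight {k : Type} [Field k] {S T : Type} [Preorder S] [Preorder T]
    (M : PersistenceModule k (S × T)) (p : S × T) (m : M.V p) : Prop :=
  ∃ (q : S) (hq : p.1 ≤ q),
    M.map (show p ≤ (q, p.2) from ⟨hq, le_refl p.2⟩) m = 0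

/-- Membership in the submodule `(Ker M^↑)_p`. -/
def MemKerUp {k : Type} [Field k] {S T : Type} [Preorder S] [Preorder T]
    (M : PersistenceModule k (S × T)) (p : S × T) (m : M.V p) : Prop :=
  ∃ (q : T) (hq : p.2 ≤ q),
    M.map (show p ≤ (p.1, q) from ⟨le_refl p.1, hq⟩) m = 0

end PMod

namespace PMod

/-- A functional on one stage of a directed system, vanishing on all elements that die later,
extends to a compatible family of functionals. -/
theorem exists_compatible_functionals {k : Type} [Field k] {ι : Type} [Preorder ι]
    [IsDirectedOrder ι] (G : ι → Type) [∀ i, AddCommGroup (G i)] [∀ i, Module k (G i)]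
    (f : ∀ i j, i ≤ j → G i →ₗ[k] G j)
    (hid : ∀ i x, f i i (le_refl i) x = x)
    (hcomp : ∀ i j l (hij : i ≤ j) (hjl : j ≤ l) x,
      f j l hjl (f i j hij x) = f i l (le_trans hij hjl) x)
    (i₀ : ι) (ψ : G i₀ →ₗ[k] k)
    (hψ : ∀ x j (hj : i₀ ≤ j), f i₀ j hj x = 0 → ψ x = 0) :
    ∃ φ : ∀ i, G i →ₗ[k] k, φ i₀ = ψ ∧ ∀ i j (hij : i ≤ j) x, φ j (f i j hij x) = φ i x := by
  classical
  haveI : Nonempty ι := ⟨i₀⟩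
  haveI : DirectedSystem G (fun i j h => f i j h) :=
    ⟨fun i x => hid i x, fun i j l hij hjl x => hcomp _ _ _ hij hjl x⟩
  let L := Module.DirectLimit G f
  let o : ∀ i, G i →ₗ[k] L := Module.DirectLimit.of k ι G f
  have hmem : ψ ∈ LinearMap.range (o i₀).dualMap := by
    rw [LinearMap.range_dualMap_eq_dualAnnihilator_ker, Submodule.mem_dualAnnihilator]
    intro x hx
    obtain ⟨j, hj, hz⟩ := Module.DirectLimit.of.zero_exact (LinearMap.mem_ker.mp hx)
    exact hψ x j hj hz
  obtain ⟨Ψ, hΨ⟩ := hmem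
  refine ⟨fun i => Ψ.comp (o i), hΨ, fun i j hij x => ?_⟩
  simp only [LinearMap.comp_apply]
  congr 1
  exact Module.DirectLimit.of_f

theorem PersistenceModule.map_map {k : Type} [Field k] {P : Type} [Preorder P]
    (M : PersistenceModule k P) {x y z : P} (hxy : x ≤ y) (hyz : y ≤ z) (v : M.V x) :
    M.map hyz (M.map hxy v) = M.map (le_trans hxy hyz) v := by
  rw [M.map_trans hxy hyz]; rfl

theorem PersistenceModule.map_self {k : Type} [Field k] {P : Type} [Preorder P]
    (M : PersistenceModule k P) {x : P} (h : x ≤ x) (v : M.V x) : M.map h v = v := by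
  rw [M.map_refl]; rfl

/-- Inverse limit argument: an element in all images lifts to a compatible family. -/
theorem exists_lift {k : Type} [Field k] {S : Type} [LinearOrder S]
    (N : PersistenceModule k S) (hfd : ∀ p, FiniteDimensional k (N.V p))
    (s : S) (m : N.V s) (hm : ∀ q (hq : q ≤ s), ∃ m', N.map hq m' = m) :
    ∃ n : ∀ x, N.V x, n s = m ∧ ∀ x y (h : x ≤ y), N.map h (n x) = n y := by
  obtain ⟨φ, h0, hφ⟩ := exists_compatible_functionals (ι := Sᵒᵈ)
    (fun i => Module.Dual k (N.V (OrderDual.ofDual i)))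
    (fun i j h => (N.map (show OrderDual.ofDual j ≤ OrderDual.ofDual i from h)).dualMap)
    (by
      intro i x
      ext v
      simp [N.map_self])
    (by
      intro i j l hij hjl x
      ext v
      simp [N.map_map])
    (OrderDual.toDual s) (Module.Dual.eval k (N.V s) m)
    (by
      intro f j hj hf
      obtain ⟨m', rfl⟩ := hm (OrderDual.ofDual j) hj
      exact LinearMap.congr_fun hf m')
  have hn : ∀ x : S, ∃ v : N.V x, ∀ f : Module.Dual k (N.V x), f v = φ (OrderDual.toDual x) f := by
    intro x
    haveI := hfd x
    refine ⟨(Module.evalEquiv k (N.V x)).symm (φ (OrderDual.toDual x)), fun f => ?_⟩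
    exact Module.apply_evalEquiv_symm_apply k (N.V x) f (φ (OrderDual.toDual x))
  choose n hn using hn
  refine ⟨n, ?_, ?_⟩
  · rw [← sub_eq_zero, ← Module.forall_dual_apply_eq_zero_iff k]
    intro f
    rw [map_sub, hn s f, h0]
    exact sub_self (f m)
  · intro x y h
    rw [← sub_eq_zero, ← Module.forall_dual_apply_eq_zero_iff k]
    intro f
    rw [map_sub, hn y f]
    have h1 := hn x (f.comp (N.map h))
    have h2 := hφ (OrderDual.toDual y) (OrderDual.toDual x) h f
    rw [sub_eq_zero, ← h2]
    exact h1

/-- A nonzero retract of an indecomposable module is the whole module. -/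
theorem isIso_of_retract {k : Type} [Field k] {P : Type} [Preorder P]
    {M N : PersistenceModule k P} (hind : Indecomposable M) (hN : ¬ IsZero N)
    (i : Hom N M) (r : Hom M N) (hri : ∀ p v, r.app p (i.app p v) = v) : IsIsoHom r := by
  have rn : ∀ {x y : P} (h : x ≤ y) v, r.app y (M.map h v) = N.map h (r.app x v) :=
    fun h v => (LinearMap.congr_fun (r.natural h) v).symm
  have inn : ∀ {x y : P} (h : x ≤ y) v, i.app y (N.map h v) = M.map h (i.app x v) :=
    fun h v => (LinearMap.congr_fun (i.natural h) v).symm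
  let K : PersistenceModule k P :=
    { V := fun p => LinearMap.ker (r.app p)
      map := fun {x y} h => (M.map h).restrict (fun v hv => by
        rw [LinearMap.mem_ker] at hv ⊢
        rw [rn, hv, map_zero])
      map_refl := fun x => by
        ext v
        simp [M.map_self]
      map_trans := fun hxy hyz => by
        ext v
        simp [M.map_map] }
  let g : Hom M (sum2 N K) :=
    { app := fun p => (r.app p).prod
        (LinearMap.codRestrict (LinearMap.ker (r.app p))
          (LinearMap.id - (i.app p).comp (r.app p)) (fun v => by
            simp [hri]))
      natural := fun {x y} h => by
        apply LinearMap.ext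
        intro v
        refine Prod.ext ?_ ?_
        · exact (rn h v).symm
        · apply Subtype.ext
          change M.map h (v - i.app x (r.app x v)) = M.map h v - i.app y (r.app y (M.map h v))
          rw [map_sub, rn, inn] }
  have hg : IsIsoHom g := by
    intro p
    constructor
    · rw [injective_iff_map_eq_zero]
      intro v hv
      have h1 : r.app p v = 0 := congrArg Prod.fst hv
      have h2 : v - i.app p (r.app p v) = 0 := congrArg (fun z => (Prod.snd z).1) hv
      simpa [h1] using h2
    · rintro ⟨a, b, hb⟩
      rw [LinearMap.mem_ker] at hb
      refine ⟨i.app p a + b, Prod.ext ?_ (Subtype.ext ?_)⟩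
      · change r.app p (i.app p a + b) = a
        rw [map_add, hri, hb, add_zero]
      · change i.app p a + b - i.app p (r.app p (i.app p a + b)) = b
        rw [map_add, hri, hb, add_zero]
        abel
  have hK : IsZero K := (hind.2 N K ⟨g, hg⟩).resolve_left hN
  intro p
  constructor
  · rw [injective_iff_map_eq_zero]
    intro v hv
    exact congrArg Subtype.val (hK p ⟨v, hv⟩)
  · intro w
    exact ⟨_, hri p w⟩

/-- A compatible family, nonzero exactly on a directed ideal, splits off. -/
theorem iso_of_family {k : Type} [Field k] {P : Type} [Preorder P]
    (M : PersistenceModule k P) (hind : Indecomposable M)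
    (I : Set P) (hI : IsConvex I) (hid : IsIdeal I) (hne : I.Nonempty)
    (hdir : ∀ p ∈ I, ∀ q ∈ I, ∃ r ∈ I, p ≤ r ∧ q ≤ r)
    (n : ∀ p, M.V p) (hn : ∀ p q (h : p ≤ q), M.map h (n p) = n q)
    (hnI : ∀ p, n p ≠ 0 ↔ p ∈ I) : Isomorphic M (intervalModule k I hI) := by
  classical
  obtain ⟨p₀, hp₀⟩ := hne
  haveI : IsDirectedOrder I := ⟨fun a b => by
    obtain ⟨r, hr, h1, h2⟩ := hdir a a.2 b b.2
    exact ⟨⟨r, hr⟩, h1, h2⟩⟩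
  -- elements that die inside `I`
  let Z : Submodule k (M.V p₀) :=
    { carrier := {v | ∃ j, ∃ (_ : j ∈ I) (h : p₀ ≤ j), M.map h v = 0}
      zero_mem' := ⟨p₀, hp₀, le_refl _, map_zero _⟩
      add_mem' := by
        rintro a b ⟨j, hj, h, ha⟩ ⟨j', hj', h', hb⟩
        obtain ⟨r, hr, h1, h2⟩ := hdir j hj j' hj'
        refine ⟨r, hr, h.trans h1, ?_⟩
        rw [map_add, ← M.map_map h h1 a, ha, ← M.map_map h' h2 b, hb]
        simp
      smul_mem' := by
        rintro c a ⟨j, hj, h, ha⟩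
        exact ⟨j, hj, h, by rw [map_smul, ha, smul_zero]⟩ }
  have hnZ : n p₀ ∉ Z := by
    rintro ⟨j, hj, h, h0⟩
    rw [hn] at h0
    exact (hnI j).2 hj h0
  obtain ⟨ψ₀, hψ₀, hψZ⟩ := Submodule.exists_le_ker_of_notMem hnZ
  let ψ : M.V p₀ →ₗ[k] k := (ψ₀ (n p₀))⁻¹ • ψ₀
  obtain ⟨φ, h0, hφ⟩ := exists_compatible_functionals (ι := I)
    (fun i => M.V i) (fun i j h => M.map (show (i : P) ≤ j from h))
    (fun i x => M.map_self _ x) (fun i j l hij hjl x => M.map_map _ _ x)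
    ⟨p₀, hp₀⟩ ψ
    (fun x j hj hx => by
      have : ψ₀ x = 0 := hψZ (show x ∈ Z from ⟨j, j.2, hj, hx⟩)
      simp [ψ, this])
  have hφn : ∀ i : I, φ i (n i) = 1 := by
    intro i
    obtain ⟨r, h1, h2⟩ := exists_ge_ge i (⟨p₀, hp₀⟩ : I)
    have e1 := hφ i r h1 (n i)
    have e2 := hφ ⟨p₀, hp₀⟩ r h2 (n p₀)
    rw [hn] at e1 e2
    rw [← e1, e2, h0]
    simp [ψ, hψ₀]
  let ii : Hom (intervalModule k I hI) M :=
    { app := fun p => (LinearMap.toSpanSingleton k (M.V p) (n p)).comp (kMod k I p).subtype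
      natural := fun {x y} h => by
        apply LinearMap.ext
        intro (c : kMod k I x)
        change M.map h ((c : k) • n x) = ((intervalMap k I h c : kMod k I y) : k) • n y
        rw [map_smul, hn]
        by_cases hy : y ∈ I
        · simp [intervalMap, hy]
        · have : n y = 0 := by
            by_contra hc
            exact hy ((hnI y).1 hc)
          simp [this] }
  let rr : Hom M (intervalModule k I hI) :=
    { app := fun p => LinearMap.codRestrict (kMod k I p)
        (if hp : p ∈ I then φ ⟨p, hp⟩ else 0) (fun v => by
          by_cases hp : p ∈ I
          · rw [kMod, if_pos hp]; exact Submodule.mem_top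
          · rw [dif_neg hp]; exact Submodule.zero_mem _)
      natural := fun {x y} h => by
        apply LinearMap.ext
        intro v
        apply Subtype.ext
        change ((intervalMap k I h (LinearMap.codRestrict (kMod k I x) _ _ v) : kMod k I y) : k) =
          (if hp : y ∈ I then φ ⟨y, hp⟩ else 0 : M.V y →ₗ[k] k) (M.map h v)
        by_cases hy : y ∈ I
        · have hx : x ∈ I := hid x y h hy
          have e := hφ ⟨x, hx⟩ ⟨y, hy⟩ h v
          simp [intervalMap, hx, hy, e]
        · simp [intervalMap, hy] }
  refine ⟨rr, isIso_of_retract hind ?_ ii rr ?_⟩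
  · intro hz
    have h1 := congrArg Subtype.val (hz p₀ (kGen k hp₀))
    exact one_ne_zero (α := k) h1
  · intro p (c : kMod k I p)
    apply Subtype.ext
    change (if hp : p ∈ I then φ ⟨p, hp⟩ else 0 : M.V p →ₗ[k] k) ((c : k) • n p) = (c : k)
    by_cases hp : p ∈ I
    · have := hφn ⟨p, hp⟩
      simp only [hp, dite_true, map_smul]
      simp [this]
    · simp [hp, kMod_coe_eq_zero k hp c]

/-- Construction of the compatible family in the horizontal case. -/
theorem exists_family {k : Type} [Field k] {S T : Type} [LinearOrder S] [LinearOrder T]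
    (M : PersistenceModule k (S × T)) (hfd : ∀ p, FiniteDimensional k (M.V p))
    (hse : ShortExactAll M)
    (hnz : ∃ (p : S × T) (m : M.V p), m ≠ 0 ∧ MemImLeft M p m ∧ MemKerRight M p m) :
    ∃ (J : Set S) (n : ∀ p, M.V p), J.Nonempty ∧ IsIdeal J ∧
      (∀ p q (h : p ≤ q), M.map h (n p) = n q) ∧ ∀ p, n p ≠ 0 ↔ p.1 ∈ J := by
  obtain ⟨⟨s, t⟩, m, hm0, hmI, q, hq, hmq⟩ := hnz
  let N : PersistenceModule k S :=
    { V := fun x => M.V (x, t)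
      map := fun {x y} h => M.map (show (x, t) ≤ (y, t) from ⟨h, le_refl t⟩)
      map_refl := fun x => M.map_refl _
      map_trans := fun _ _ => M.map_trans _ _ }
  obtain ⟨a, ha0, ha⟩ := exists_lift N (fun x => hfd _) s m (fun q hq => hmI q hq)
  replace ha : ∀ x y (h : x ≤ y),
    M.map (show (x, t) ≤ (y, t) from ⟨h, le_refl t⟩) (a x) = a y := ha
  have haq : ∀ x, q ≤ x → a x = 0 := by
    intro x hx
    have h1 : a q = 0 := by
      rw [← ha s q hq, ha0]; exact hmq
    rw [← ha q x hx, h1, map_zero]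
  -- good elements
  let good : ∀ p : S × T, M.V p → Prop := fun p v =>
    M.map (show p ≤ (max p.1 q, p.2) from ⟨le_max_left _ _, le_refl _⟩) v = 0 ∧
    M.map (show p ≤ (p.1, max p.2 t) from ⟨le_refl _, le_max_left _ _⟩) v =
      M.map (show (p.1, t) ≤ (p.1, max p.2 t) from ⟨le_refl _, le_max_right _ _⟩) (a p.1)
  have huniq : ∀ p v w, good p v → good p w → v = w := by
    rintro ⟨x, y⟩ v w ⟨h1, h2⟩ ⟨h3, h4⟩
    rw [← sub_eq_zero]
    refine (hse x (max x q) y (max y t) (le_max_left _ _) (le_max_left _ _)).1 _ ?_ ?_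
    · rw [map_sub, sub_eq_zero]; exact h2.trans h4.symm
    · rw [map_sub, sub_eq_zero]; exact h1.trans h3.symm
  have hex : ∀ p, ∃ v, good p v := by
    rintro ⟨x, y⟩
    obtain ⟨v, hv1, hv2⟩ := (hse x (max x q) y (max y t) (le_max_left _ _) (le_max_left _ _)).2.1
      (M.map (show (x, t) ≤ (x, max y t) from ⟨le_refl _, le_max_right _ _⟩) (a x)) 0 (by
        rw [M.map_map, map_zero]
        have e := M.map_map (show (x, t) ≤ (max x q, t) from ⟨le_max_left _ _, le_refl _⟩)
          (show (max x q, t) ≤ (max x q, max y t) from ⟨le_refl _, le_max_right _ _⟩) (a x)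
        rw [← e, ha _ _ (le_max_left _ _), haq _ (le_max_right _ _), map_zero])
    exact ⟨v, hv2, hv1⟩
  choose n hn using hex
  refine ⟨{x | a x ≠ 0}, n, ⟨s, ?_⟩, ?_, ?_, ?_⟩
  · change a s ≠ 0
    rw [ha0]; exact hm0
  · intro x y hxy hy hx
    apply hy
    rw [← ha x y hxy, hx, map_zero]
  · rintro ⟨x, y⟩ ⟨x', y'⟩ h
    apply huniq _ _ _ _ (hn _)
    have hx : x ≤ x' := h.1
    have hy : y ≤ y' := h.2
    obtain ⟨h1, h2⟩ := hn (x, y)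
    dsimp only at h1 h2
    refine ⟨?_, ?_⟩
    · dsimp only
      rw [M.map_map]
      rw [← M.map_map (show (x, y) ≤ (max x q, y) from ⟨le_max_left _ _, le_refl _⟩)
        (show (max x q, y) ≤ (max x' q, y') from ⟨max_le_max_right q hx, hy⟩), h1, map_zero]
    · dsimp only
      rw [M.map_map]
      rw [← M.map_map (show (x, y) ≤ (x, max y t) from ⟨le_refl _, le_max_left _ _⟩)
        (show (x, max y t) ≤ (x', max y' t) from ⟨hx, max_le_max_right t hy⟩), h2, M.map_map,
        ← ha x x' hx, M.map_map]
  · rintro ⟨x, y⟩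
    change n (x, y) ≠ 0 ↔ a x ≠ 0
    rw [not_iff_not]
    obtain ⟨h1, h2⟩ := hn (x, y)
    dsimp only at h1 h2
    constructor
    · intro h
      rw [h, map_zero] at h2
      refine (hse x (max x q) t (max y t) (le_max_left _ _) (le_max_right _ _)).1 _ h2.symm ?_
      rw [ha _ _ (le_max_left _ _), haq _ (le_max_right _ _)]
    · intro h
      apply huniq _ _ _ (hn _)
      refine ⟨map_zero _, ?_⟩
      dsimp only
      rw [h, map_zero, map_zero]

/-- The transposed module. -/
def swapModule {k : Type} [Field k] {S T : Type} [Preorder S] [Preorder T]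
    (M : PersistenceModule k (S × T)) : PersistenceModule k (T × S) where
  V p := M.V (p.2, p.1)
  map {x y} h := M.map (show (x.2, x.1) ≤ (y.2, y.1) from ⟨h.2, h.1⟩)
  map_refl _ := M.map_refl _
  map_trans _ _ := M.map_trans _ _

theorem swap_shortExact {k : Type} [Field k] {S T : Type} [Preorder S] [Preorder T]
    (M : PersistenceModule k (S × T)) (h : ShortExactAll M) : ShortExactAll (swapModule M) := by
  intro x x' y y' hx hy
  obtain ⟨h1, h2, h3⟩ := h y y' x x' hy hx
  refine ⟨fun ma e1 e2 => h1 ma e2 e1, fun mb mc e => ?_, fun md => ?_⟩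
  · obtain ⟨ma, e1, e2⟩ := h2 mc mb e.symm
    exact ⟨ma, e2, e1⟩
  · obtain ⟨mb, mc, e⟩ := h3 md
    refine ⟨-mc, -mb, ?_⟩
    change M.map (show (y', x) ≤ (y', x') from ⟨le_refl _, hx⟩) (-mc) -
      M.map (show (y, x') ≤ (y', x') from ⟨hy, le_refl _⟩) (-mb) = md
    rw [map_neg, map_neg, neg_sub_neg]
    exact e

theorem iso_of_prod_family {k : Type} [Field k] {S T : Type} [LinearOrder S] [LinearOrder T]
    (M : PersistenceModule k (S × T)) (hind : Indecomposable M)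
    (JS : Set S) (JT : Set T) (hS : JS.Nonempty) (hT : JT.Nonempty)
    (iS : IsIdeal JS) (iT : IsIdeal JT)
    (n : ∀ p, M.V p) (hn : ∀ p q (h : p ≤ q), M.map h (n p) = n q)
    (hnI : ∀ p, n p ≠ 0 ↔ p ∈ JS ×ˢ JT) :
    ∃ (JS : Set S) (JT : Set T)
      (h : (IsIntervalLin JS ∧ IsIdeal JS) ∧ (IsIntervalLin JT ∧ IsIdeal JT)),
      Isomorphic M (intervalModule k (JS ×ˢ JT) (h.1.1.2.prod h.2.1.2)) := by
  refine ⟨JS, JT, ⟨⟨⟨hS, iS.isConvex⟩, iS⟩, ⟨⟨hT, iT.isConvex⟩, iT⟩⟩, ?_⟩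
  refine iso_of_family M hind _ _ ?_ (hS.prod hT) ?_ n hn hnI
  · intro p q hpq hq
    exact ⟨iS _ _ hpq.1 hq.1, iT _ _ hpq.2 hq.2⟩
  · intro p hp q hq
    refine ⟨(max p.1 q.1, max p.2 q.2), ⟨?_, ?_⟩, ⟨le_max_left _ _, le_max_left _ _⟩,
      ⟨le_max_right _ _, le_max_right _ _⟩⟩
    · rcases max_choice p.1 q.1 with h | h
      · simpa only [h] using hp.1
      · simpa only [h] using hq.1
    · rcases max_choice p.2 q.2 with h | h
      · simpa only [h] using hp.2
      · simpa only [h] using hq.2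

end PMod

open PMod in
/-- Lemma 4.6: an indecomposable pointwise finite-dimensional module with all rectangle
sequences short exact and `Im M^← ∩ Ker M^→ ≠ 0` or `Im M^↓ ∩ Ker M^↑ ≠ 0` is a block
module of type (db). -/
theorem stmt16 {k : Type} [Field k] {S T : Type} [LinearOrder S] [LinearOrder T]
    (M : PersistenceModule k (S × T)) (hfd : ∀ p, FiniteDimensional k (M.V p))
    (hse : ShortExactAll M) (hind : Indecomposable M)
    (hnz : (∃ (p : S × T) (m : M.V p), m ≠ 0 ∧ MemImLeft M p m ∧ MemKerRight M p m) ∨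
           (∃ (p : S × T) (m : M.V p), m ≠ 0 ∧ MemImDown M p m ∧ MemKerUp M p m)) :
    ∃ (JS : Set S) (JT : Set T)
      (h : (IsIntervalLin JS ∧ IsIdeal JS) ∧ (IsIntervalLin JT ∧ IsIdeal JT)),
      Isomorphic M (intervalModule k (JS ×ˢ JT) (h.1.1.2.prod h.2.1.2)) := by
  rcases hnz with hnz | hnz
  · have ht : Nonempty T := ⟨hnz.choose.2⟩
    obtain ⟨J, n, hJ, iJ, hn, hnJ⟩ := exists_family M hfd hse hnz
    refine iso_of_prod_family M hind J Set.univ hJ Set.univ_nonempty iJ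
      (fun _ _ _ _ => trivial) n hn (fun p => ?_)
    rw [hnJ p]
    simp
  · have hs : Nonempty S := ⟨hnz.choose.1⟩
    obtain ⟨⟨x, y⟩, m, hm, h1, q, hq, h2⟩ := hnz
    obtain ⟨J, n, hJ, iJ, hn, hnJ⟩ := exists_family (swapModule M) (fun p => hfd _)
      (swap_shortExact M hse) ⟨(y, x), m, hm, fun q hq => h1 q hq, q, hq, h2⟩
    refine iso_of_prod_family M hind Set.univ J Set.univ_nonempty hJ
      (fun _ _ _ _ => trivial) iJ (fun p => n (p.2, p.1))
      (fun p q h => hn (p.2, p.1) (q.2, q.1) ⟨h.2, h.1⟩) (fun p => ?_)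
    refine (hnJ (p.2, p.1)).trans ?_
    simp
end

section
/- Let k be a field, let γ : ℤ → ℤ² be a zigzag path, and let Z(γ) ⊆ ℝ² be the associated zigzag subposet with the partial order inherited from ℝ². Then every pointwise finite-dimensional persistence module M : Z(γ) → Vec_k is isomorphic to a direct sum of interval modules k_I for intervals I ⊆ Z(γ). -/
namespace PMod

/-- A zigzag path in `ℤ²`: each step moves right or down, and the path diverges to
`(∞, -∞)` (resp. `(-∞, ∞)`) as `i → ∞` (resp. `i → -∞`). -/
def IsZigzagPath (γ : ℤ → ℤ × ℤ) : Prop :=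
  (∀ i : ℤ, γ (i + 1) = γ i + (1, 0) ∨ γ (i + 1) = γ i - (0, 1)) ∧
  (∀ n : ℤ, ∃ N : ℤ, ∀ i ≥ N, n ≤ (γ i).1 ∧ (γ i).2 ≤ -n) ∧
  (∀ n : ℤ, ∃ N : ℤ, ∀ i ≤ N, (γ i).1 ≤ -n ∧ n ≤ (γ i).2)

/-- The zigzag subposet `Z(γ) ⊆ ℝ²` associated to a zigzag path `γ`. -/
def Zset (γ : ℤ → ℤ × ℤ) : Set (ℝ × ℝ) :=
  {p | ∃ i : ℤ,
    ((((γ i).1 : ℝ), ((γ i).2 : ℝ)) ≤ p ∧ p ≤ (((γ (i + 1)).1 : ℝ), ((γ (i + 1)).2 : ℝ))) ∨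
    ((((γ (i + 1)).1 : ℝ), ((γ (i + 1)).2 : ℝ)) ≤ p ∧ p ≤ (((γ i).1 : ℝ), ((γ i).2 : ℝ)))}

end PMod


namespace PMod.ZZ
open PMod

/-- Abstract zigzag line structure on `P`. -/
structure Zig {P : Type} [Preorder P] (τ : P ≃ ℝ) : Prop where
  anti : ∀ a b : P, a ≤ b → b ≤ a → a = b
  btw : ∀ a b c : P, a ≤ b → τ a ≤ τ c → τ c ≤ τ b → a ≤ c ∧ c ≤ b
  btw' : ∀ a b c : P, a ≤ b → τ b ≤ τ c → τ c ≤ τ a → a ≤ c ∧ c ≤ b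
  seg : ∀ i : ℤ, (∀ a b : P, (i : ℝ) ≤ τ a → τ a ≤ τ b → τ b ≤ i + 1 → a ≤ b) ∨
    (∀ a b : P, (i : ℝ) ≤ τ a → τ a ≤ τ b → τ b ≤ i + 1 → b ≤ a)

theorem Zig.neg {P : Type} [Preorder P] {τ : P ≃ ℝ} (h : Zig τ) :
    Zig (τ.trans (Equiv.neg ℝ)) where
  anti := h.anti
  btw a b c hab h1 h2 := by
    simp only [Equiv.trans_apply, Equiv.neg_apply, neg_le_neg_iff] at h1 h2
    exact h.btw' a b c hab h2 h1
  btw' a b c hab h1 h2 := by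
    simp only [Equiv.trans_apply, Equiv.neg_apply, neg_le_neg_iff] at h1 h2
    exact h.btw a b c hab h2 h1
  seg i := by
    simp only [Equiv.trans_apply, Equiv.neg_apply]
    rcases h.seg (-i - 1) with h1 | h1
    · right
      intro a b ha hab hb
      apply h1 b a <;> push_cast <;> linarith
    · left
      intro a b ha hab hb
      apply h1 b a <;> push_cast <;> linarith

/-- Sections of `M` over `A`, supported on `R`. -/
def IsSec {k : Type} [Field k] {P : Type} [Preorder P] (M : PersistenceModule k P)
    (A R : Set P) (v : ∀ y, M.V y) : Prop :=
  (∀ y ∈ A, y ∉ R → v y = 0) ∧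
  ∀ a b (h : a ≤ b), a ∈ A → b ∈ A → a ∈ R → M.map h (v a) = v b

/-- Cosections of `M` over `A`, supported on `R`. -/
def IsCosec {k : Type} [Field k] {P : Type} [Preorder P] (M : PersistenceModule k P)
    (A R : Set P) (φ : ∀ y, Module.Dual k (M.V y)) : Prop :=
  (∀ y ∈ A, y ∉ R → φ y = 0) ∧
  ∀ a b (h : a ≤ b), a ∈ A → b ∈ A → b ∈ R → ∀ m, φ b (M.map h m) = φ a m

section
variable {k : Type} [Field k] {P : Type} [Preorder P] {τ : P ≃ ℝ}
  {M : PersistenceModule k P}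

theorem map_map {a b c : P} (hab : a ≤ b) (hbc : b ≤ c) (hac : a ≤ c) (m : M.V a) :
    M.map hbc (M.map hab m) = M.map hac m := by
  rw [M.map_trans hab hbc]; rfl

theorem map_self {a : P} (h : a ≤ a) (m : M.V a) : M.map h m = m := by
  rw [M.map_refl a]; rfl

theorem IsSec.mono {A A' R : Set P} {v : ∀ y, M.V y} (h : IsSec M A R v) (hA : A' ⊆ A) :
    IsSec M A' R v :=
  ⟨fun y hy => h.1 y (hA hy), fun a b hab ha hb => h.2 a b hab (hA ha) (hA hb)⟩

theorem IsCosec.mono {A A' R : Set P} {v : ∀ y, Module.Dual k (M.V y)} (h : IsCosec M A R v)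
    (hA : A' ⊆ A) : IsCosec M A' R v :=
  ⟨fun y hy => h.1 y (hA hy), fun a b hab ha hb => h.2 a b hab (hA ha) (hA hb)⟩

theorem glueSec (hz : Zig τ) {A₁ A₂ R : Set P} {t : P} (h1 : ∀ a ∈ A₁, τ a ≤ τ t)
    (h2 : ∀ a ∈ A₂, τ t ≤ τ a) (t1 : t ∈ A₁) (t2 : t ∈ A₂) (tR : t ∈ R)
    {v₁ v₂ : ∀ y, M.V y} (hv : v₁ t = v₂ t) (s1 : IsSec M A₁ R v₁) (s2 : IsSec M A₂ R v₂) :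
    ∃ v : ∀ y, M.V y, (∀ y ∈ A₁, v y = v₁ y) ∧ (∀ y ∈ A₂, v y = v₂ y) ∧
      IsSec M (A₁ ∪ A₂) R v := by
  classical
  have e1 : ∀ y ∈ A₁, (fun y => if τ y ≤ τ t then v₁ y else v₂ y : ∀ y, M.V y) y = v₁ y :=
    fun y hy => if_pos (h1 y hy)
  have e2 : ∀ y ∈ A₂, (fun y => if τ y ≤ τ t then v₁ y else v₂ y : ∀ y, M.V y) y = v₂ y := by
    intro y hy
    by_cases h : τ y ≤ τ t
    · obtain rfl : y = t := τ.injective (le_antisymm h (h2 y hy))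
      simp [hv]
    · exact if_neg h
  generalize (fun y => if τ y ≤ τ t then v₁ y else v₂ y : ∀ y, M.V y) = v at e1 e2
  refine ⟨v, e1, e2, ?_, ?_⟩
  · rintro y (hy | hy) hR
    · rw [e1 y hy]; exact s1.1 y hy hR
    · rw [e2 y hy]; exact s2.1 y hy hR
  · rintro a b h (ha | ha) (hb | hb) hR
    · rw [e1 a ha, e1 b hb]; exact s1.2 a b h ha hb hR
    · obtain ⟨h3, h4⟩ := hz.btw a b t h (h1 a ha) (h2 b hb)
      rw [e1 a ha, e2 b hb, ← map_map h3 h4, s1.2 a t h3 ha t1 hR, hv, s2.2 t b h4 t2 hb tR]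
    · obtain ⟨h3, h4⟩ := hz.btw' a b t h (h1 b hb) (h2 a ha)
      rw [e2 a ha, e1 b hb, ← map_map h3 h4, s2.2 a t h3 ha t2 hR, ← hv, s1.2 t b h4 t1 hb tR]
    · rw [e2 a ha, e2 b hb]; exact s2.2 a b h ha hb hR

theorem glueCosec (hz : Zig τ) {A₁ A₂ R : Set P} {t : P} (h1 : ∀ a ∈ A₁, τ a ≤ τ t)
    (h2 : ∀ a ∈ A₂, τ t ≤ τ a) (t1 : t ∈ A₁) (t2 : t ∈ A₂) (tR : t ∈ R)
    {v₁ v₂ : ∀ y, Module.Dual k (M.V y)} (hv : v₁ t = v₂ t) (s1 : IsCosec M A₁ R v₁)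
    (s2 : IsCosec M A₂ R v₂) :
    ∃ v : ∀ y, Module.Dual k (M.V y), (∀ y ∈ A₁, v y = v₁ y) ∧ (∀ y ∈ A₂, v y = v₂ y) ∧
      IsCosec M (A₁ ∪ A₂) R v := by
  classical
  have e1 : ∀ y ∈ A₁, (fun y => if τ y ≤ τ t then v₁ y else v₂ y :
    ∀ y, Module.Dual k (M.V y)) y = v₁ y :=
    fun y hy => if_pos (h1 y hy)
  have e2 : ∀ y ∈ A₂, (fun y => if τ y ≤ τ t then v₁ y else v₂ y :
    ∀ y, Module.Dual k (M.V y)) y = v₂ y := by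
    intro y hy
    by_cases h : τ y ≤ τ t
    · obtain rfl : y = t := τ.injective (le_antisymm h (h2 y hy))
      simp [hv]
    · exact if_neg h
  generalize (fun y => if τ y ≤ τ t then v₁ y else v₂ y :
    ∀ y, Module.Dual k (M.V y)) = v at e1 e2
  refine ⟨v, e1, e2, ?_, ?_⟩
  · rintro y (hy | hy) hR
    · rw [e1 y hy]; exact s1.1 y hy hR
    · rw [e2 y hy]; exact s2.1 y hy hR
  · rintro a b h (ha | ha) (hb | hb) hR m
    · rw [e1 a ha, e1 b hb]; exact s1.2 a b h ha hb hR m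
    · obtain ⟨h3, h4⟩ := hz.btw a b t h (h1 a ha) (h2 b hb)
      rw [e1 a ha, e2 b hb, ← map_map h3 h4, s2.2 t b h4 t2 hb hR, ← hv, s1.2 a t h3 ha t1 tR]
    · obtain ⟨h3, h4⟩ := hz.btw' a b t h (h1 b hb) (h2 a ha)
      rw [e2 a ha, e1 b hb, ← map_map h3 h4, s1.2 t b h4 t1 hb hR, hv, s2.2 a t h3 ha t2 tR]
    · rw [e2 a ha, e2 b hb]; exact s2.2 a b h ha hb hR m

open Classical in
/-- The section generated by a vector at a lowest point. -/
noncomputable def secFrom (M : PersistenceModule k P) (s : P) (w : M.V s) (y : P) : M.V y :=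
  if h : s ≤ y then M.map h w else 0

theorem secFrom_self (s : P) (w : M.V s) : secFrom M s w s = w := by
  simp [secFrom, map_self]

theorem secFrom_isSec (s : P) (w : M.V s) {A : Set P} (hA : ∀ a ∈ A, s ≤ a) :
    IsSec M A Set.univ (secFrom M s w) := by
  refine ⟨fun y _ h => absurd trivial h, fun a b h ha hb _ => ?_⟩
  simp only [secFrom, dif_pos (hA a ha), dif_pos (hA b hb)]
  exact map_map _ _ _ _

open Classical in
/-- The cosection generated by a functional at a highest point. -/
noncomputable def cosecFrom (M : PersistenceModule k P) (s : P) (w : Module.Dual k (M.V s))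
    (y : P) : Module.Dual k (M.V y) :=
  if h : y ≤ s then w.comp (M.map h) else 0

theorem cosecFrom_self (s : P) (w : Module.Dual k (M.V s)) : cosecFrom M s w s = w := by
  ext m
  simp [cosecFrom, map_self]

theorem cosecFrom_isCosec (s : P) (w : Module.Dual k (M.V s)) {A : Set P}
    (hA : ∀ a ∈ A, a ≤ s) : IsCosec M A Set.univ (cosecFrom M s w) := by
  refine ⟨fun y _ h => absurd trivial h, fun a b h ha hb _ m => ?_⟩
  simp only [cosecFrom, dif_pos (hA a ha), dif_pos (hA b hb), LinearMap.comp_apply]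
  rw [map_map]

/-- The `τ`-segment from `x` to `y`. -/
def Seg (τ : P ≃ ℝ) (x y : P) : Set P := {z | τ x ≤ τ z ∧ τ z ≤ τ y}

/-- Vectors at `x` extending over `Seg x y`, ending in `B`. -/
def F (τ : P ≃ ℝ) (M : PersistenceModule k P) (x y : P) (B : Submodule k (M.V y)) :
    Submodule k (M.V x) where
  carrier := {u | ∃ v, IsSec M (Seg τ x y) Set.univ v ∧ v x = u ∧ v y ∈ B}
  zero_mem' := ⟨fun _ => 0, ⟨fun _ _ _ => rfl, fun _ _ _ _ _ _ => map_zero _⟩, rfl, B.zero_mem⟩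
  add_mem' := by
    rintro a b ⟨v, hv, rfl, hvB⟩ ⟨w, hw, rfl, hwB⟩
    refine ⟨fun y => v y + w y, ⟨fun y _ h => absurd trivial h, fun a b h ha hb hR => ?_⟩, rfl,
      B.add_mem hvB hwB⟩
    rw [map_add, hv.2 a b h ha hb hR, hw.2 a b h ha hb hR]
  smul_mem' := by
    rintro c b ⟨v, hv, rfl, hvB⟩
    refine ⟨fun y => c • v y, ⟨fun y _ h => absurd trivial h, fun a b h ha hb hR => ?_⟩, rfl,
      B.smul_mem c hvB⟩
    rw [map_smul, hv.2 a b h ha hb hR]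

theorem mem_F {x y : P} {B : Submodule k (M.V y)} {u : M.V x} :
    u ∈ F τ M x y B ↔ ∃ v, IsSec M (Seg τ x y) Set.univ v ∧ v x = u ∧ v y ∈ B := Iff.rfl

theorem seg_union {x t y : P} (h1 : τ x ≤ τ t) (h2 : τ t ≤ τ y) :
    Seg τ x t ∪ Seg τ t y = Seg τ x y := by
  ext z
  simp only [Seg, Set.mem_union, Set.mem_ofPred_eq]
  constructor
  · rintro (h | h) <;> constructor <;> linarith
  · intro h
    rcases le_total (τ z) (τ t) with h3 | h3
    · exact Or.inl ⟨h.1, h3⟩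
    · exact Or.inr ⟨h3, h.2⟩

theorem left_mem_seg {x y : P} (h : τ x ≤ τ y) : x ∈ Seg τ x y := ⟨le_rfl, h⟩
theorem right_mem_seg {x y : P} (h : τ x ≤ τ y) : y ∈ Seg τ x y := ⟨h, le_rfl⟩

theorem F_comp (hz : Zig τ) {x t y : P} (h1 : τ x ≤ τ t) (h2 : τ t ≤ τ y)
    (B : Submodule k (M.V y)) : F τ M x t (F τ M t y B) ≤ F τ M x y B := by
  rintro u ⟨v, hv, rfl, w, hw, hwt, hwB⟩
  obtain ⟨s, s1, s2, hs⟩ := glueSec hz (A₁ := Seg τ x t) (A₂ := Seg τ t y) (t := t)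
    (fun a ha => ha.2) (fun a ha => ha.1) (right_mem_seg h1) (left_mem_seg h2)
    (Set.mem_univ t) hwt.symm hv hw
  rw [seg_union h1 h2] at hs
  refine ⟨s, hs, s1 x (left_mem_seg h1), ?_⟩
  rw [s2 y (right_mem_seg h2)]
  exact hwB

/-- The duality property for a segment. -/
def DualProp (τ : P ≃ ℝ) (M : PersistenceModule k P) (x y : P) : Prop :=
  ∀ (B : Submodule k (M.V y)) (φ : Module.Dual k (M.V x)), (∀ u ∈ F τ M x y B, φ u = 0) →
    ∃ ψ, IsCosec M (Seg τ x y) Set.univ ψ ∧ ψ x = φ ∧ ∀ b ∈ B, ψ y b = 0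

theorem DualProp.trans (hz : Zig τ) {x t y : P} (h1 : τ x ≤ τ t) (h2 : τ t ≤ τ y)
    (d1 : DualProp τ M x t) (d2 : DualProp τ M t y) : DualProp τ M x y := by
  intro B φ hφ
  obtain ⟨ψ, hψ, rfl, hB⟩ := d1 (F τ M t y B) φ (fun u hu => hφ u (F_comp hz h1 h2 B hu))
  obtain ⟨θ, hθ, ht, hB'⟩ := d2 B (ψ t) hB
  obtain ⟨s, s1, s2, hs⟩ := glueCosec hz (A₁ := Seg τ x t) (A₂ := Seg τ t y) (t := t)
    (fun a ha => ha.2) (fun a ha => ha.1) (right_mem_seg h1) (left_mem_seg h2)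
    (Set.mem_univ t) ht.symm hψ hθ
  rw [seg_union h1 h2] at hs
  refine ⟨s, hs, s1 x (left_mem_seg h1), ?_⟩
  rw [s2 y (right_mem_seg h2)]
  exact hB'

theorem exists_factor {E V : Type} [AddCommGroup E] [Module k E] [AddCommGroup V] [Module k V]
    (f : E →ₗ[k] V) (φ : Module.Dual k E) (h : ∀ e, f e = 0 → φ e = 0) :
    ∃ ψ : Module.Dual k V, ∀ e, ψ (f e) = φ e := by
  have : φ ∈ LinearMap.range f.dualMap := by
    rw [LinearMap.range_dualMap_eq_dualAnnihilator_ker]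
    rw [Submodule.mem_dualAnnihilator]
    intro e he
    exact h e he
  obtain ⟨ψ, rfl⟩ := this
  exact ⟨ψ, fun e => rfl⟩

theorem dual_fwd {x t : P} (hxt : τ x ≤ τ t) (h : ∀ a ∈ Seg τ x t, x ≤ a ∧ a ≤ t) :
    DualProp τ M x t := by
  intro B φ hφ
  have hx : x ≤ t := (h t (right_mem_seg hxt)).1
  obtain ⟨ψ, hψ⟩ := exists_factor (B.mkQ.comp (M.map hx)) φ (by
    intro e he
    apply hφ
    refine ⟨secFrom M x e, secFrom_isSec x e (fun a ha => (h a ha).1), secFrom_self x e, ?_⟩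
    simpa [secFrom, hx] using he)
  refine ⟨cosecFrom M t (ψ.comp B.mkQ), cosecFrom_isCosec t _ (fun a ha => (h a ha).2), ?_, ?_⟩
  · ext m
    simp only [cosecFrom, dif_pos hx]
    exact hψ m
  · intro b hb
    rw [cosecFrom_self, LinearMap.comp_apply]
    have : B.mkQ b = 0 := by simpa using hb
    rw [this, map_zero]

theorem dual_bwd {x t : P} (hxt : τ x ≤ τ t) (h : ∀ a ∈ Seg τ x t, t ≤ a ∧ a ≤ x) :
    DualProp τ M x t := by
  intro B φ hφ
  have hx : t ≤ x := (h t (right_mem_seg hxt)).2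
  refine ⟨cosecFrom M x φ, cosecFrom_isCosec x _ (fun a ha => (h a ha).2), cosecFrom_self x φ, ?_⟩
  intro b hb
  simp only [cosecFrom, dif_pos hx, LinearMap.comp_apply]
  apply hφ
  refine ⟨secFrom M t b, secFrom_isSec t b (fun a ha => (h a ha).1), ?_, ?_⟩
  · simp [secFrom, hx]
  · rw [secFrom_self]; exact hb

theorem dual_seg (hz : Zig τ) {x t : P} (hxt : τ x ≤ τ t) (i : ℤ) (h1 : (i : ℝ) ≤ τ x)
    (h2 : τ t ≤ i + 1) : DualProp τ M x t := by
  rcases hz.seg i with h | h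
  · apply dual_fwd hxt
    intro a ha
    exact ⟨h x a h1 ha.1 (ha.2.trans h2), h a t (h1.trans ha.1) ha.2 h2⟩
  · apply dual_bwd hxt
    intro a ha
    exact ⟨h a t (h1.trans ha.1) ha.2 h2, h x a h1 ha.1 (ha.2.trans h2)⟩

theorem dual_all (hz : Zig τ) (n : ℕ) : ∀ (i : ℤ) {x y : P}, τ x ≤ τ y → (i : ℝ) ≤ τ x →
    τ y ≤ i + 1 + n → DualProp τ M x y := by
  induction n with
  | zero =>
    intro i x y hxy h1 h2
    exact dual_seg hz hxy i h1 (by simpa using h2)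
  | succ n ih =>
    intro i x y hxy h1 h2
    push_cast at h2
    rcases le_total (τ y) (i + 1) with h3 | h3
    · exact dual_seg hz hxy i h1 h3
    rcases le_total (τ x) (i + 1) with h4 | h4
    · have ht : τ (τ.symm (i + 1)) = (i + 1 : ℝ) := by simp
      apply DualProp.trans hz (t := τ.symm (i + 1)) (by rw [ht]; exact h4) (by rw [ht]; exact h3)
      · exact dual_seg hz (by rw [ht]; exact h4) i h1 (by rw [ht])
      · apply ih (i + 1) (by rw [ht]; exact h3)
        · rw [ht]; push_cast; exact le_rfl
        · push_cast; linarith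
    · apply ih (i + 1) hxy
      · push_cast; exact h4
      · push_cast; linarith

theorem dual (hz : Zig τ) {x y : P} (hxy : τ x ≤ τ y) : DualProp τ M x y := by
  obtain ⟨n, hn⟩ := exists_nat_ge (τ y - (⌊τ x⌋ + 1))
  exact dual_all hz n ⌊τ x⌋ hxy (Int.floor_le _) (by linarith)

end
end PMod.ZZ

namespace PMod.ZZ
open PMod

theorem lin_core {k E J : Type} [Field k] [AddCommGroup E] [Module k E] (e : J → E) (c : J → k)
    (h : ∀ s : Finset J, ∃ l : Module.Dual k E, ∀ j ∈ s, l (e j) = c j) :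
    ∃ l : Module.Dual k E, ∀ j, l (e j) = c j := by
  obtain ⟨l, hl⟩ := exists_factor (Finsupp.linearCombination k e)
    (Finsupp.linearCombination k c) (by
      intro f hf
      obtain ⟨l, hl⟩ := h f.support
      have h1 : l (Finsupp.linearCombination k e f) = Finsupp.linearCombination k c f := by
        simp only [Finsupp.linearCombination_apply, Finsupp.sum, map_sum, map_smul]
        exact Finset.sum_congr rfl fun j hj => by rw [hl j hj]
      rw [← h1, hf, map_zero])
  refine ⟨l, fun j => ?_⟩
  simpa using hl (Finsupp.single j 1)

section
variable {k : Type} [Field k] {P : Type}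

theorem exists_least {V : Type} [AddCommGroup V] [Module k V] [FiniteDimensional k V]
    (f : P → Submodule k V) (S : Set P) (hS : S.Nonempty)
    (hc : ∀ a ∈ S, ∀ b ∈ S, f a ≤ f b ∨ f b ≤ f a) : ∃ y ∈ S, ∀ z ∈ S, f y ≤ f z := by
  obtain ⟨_, ⟨y, hy, rfl⟩, h⟩ := (wellFounded_lt (α := Submodule k V)).has_min (f '' S)
    (hS.image f)
  refine ⟨y, hy, fun z hz => ?_⟩
  rcases hc y hy z hz with h1 | h1
  · exact h1
  · by_contra h2
    exact h (f z) ⟨z, hz, rfl⟩ (lt_of_le_not_ge h1 h2)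

theorem exists_greatest {V : Type} [AddCommGroup V] [Module k V] [FiniteDimensional k V]
    (f : P → Submodule k V) (S : Set P) (hS : S.Nonempty)
    (hc : ∀ a ∈ S, ∀ b ∈ S, f a ≤ f b ∨ f b ≤ f a) : ∃ y ∈ S, ∀ z ∈ S, f z ≤ f y := by
  obtain ⟨_, ⟨y, hy, rfl⟩, h⟩ := (wellFounded_gt (α := Submodule k V)).has_min (f '' S)
    (hS.image f)
  refine ⟨y, hy, fun z hz => ?_⟩
  rcases hc z hz y hy with h1 | h1
  · exact h1
  · by_contra h2
    exact h (f z) ⟨z, hz, rfl⟩ (lt_of_le_not_ge h1 h2)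

open Classical in
/-- Evaluation of a family of functionals. -/
noncomputable def ev {V : P → Type} [∀ y, AddCommGroup (V y)] [∀ y, Module k (V y)]
    (φ : ∀ y, Module.Dual k (V y)) : Module.Dual k (Π₀ y, V y) :=
  DFinsupp.lsum k φ

open Classical in
theorem ev_single {V : P → Type} [∀ y, AddCommGroup (V y)] [∀ y, Module k (V y)]
    (φ : ∀ y, Module.Dual k (V y)) (y : P) (m : V y) :
    ev φ (DFinsupp.single y m) = φ y m := by
  simp [ev]

theorem lin_compact {V : P → Type} [∀ y, AddCommGroup (V y)] [∀ y, Module k (V y)]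
    (Good : Finset P → (∀ y, Module.Dual k (V y)) → Prop)
    (anti : ∀ S T φ, S ⊆ T → Good T φ → Good S φ) (h : ∀ S, ∃ φ, Good S φ) :
    ∃ φ : ∀ y, Module.Dual k (V y), ∀ S e c, (∀ ψ, Good S ψ → ev ψ e = c) → ev φ e = c := by
  classical
  let J := {j : (Π₀ y, V y) × k // ∃ S, ∀ ψ, Good S ψ → ev ψ j.1 = j.2}
  obtain ⟨l, hl⟩ := lin_core (J := J) (fun j => j.1.1) (fun j => j.1.2) (by
    intro s
    choose T hT using fun j : J => j.2
    obtain ⟨φ, hφ⟩ := h (s.biUnion T)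
    exact ⟨ev φ, fun j hj => hT j φ (anti _ _ _ (Finset.subset_biUnion_of_mem T hj) hφ)⟩)
  refine ⟨fun y => l.comp (DFinsupp.lsingle y), fun S e c he => ?_⟩
  have : ev (fun y => l.comp (DFinsupp.lsingle y)) = l := by
    apply DFinsupp.lhom_ext
    intro y m
    rw [ev_single]; rfl
  rw [this]
  exact hl ⟨(e, c), S, he⟩

end

section
variable {k : Type} [Field k] {P : Type} [Preorder P] {τ : P ≃ ℝ}
  {M : PersistenceModule k P}

theorem compact_cosec (A R : Set P) (x : P) (φ : Module.Dual k (M.V x))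
    (h : ∀ S : Finset P, ∃ ψ : ∀ y, Module.Dual k (M.V y), ψ x = φ ∧ IsCosec M (A ∩ S) R ψ) :
    ∃ ψ, ψ x = φ ∧ IsCosec M A R ψ := by
  classical
  obtain ⟨ψ, hψ⟩ := lin_compact (fun S ψ => ψ x = φ ∧ IsCosec M (A ∩ S) R ψ)
    (fun S T ψ hST h => ⟨h.1, h.2.mono (Set.inter_subset_inter_right _ (by exact_mod_cast hST))⟩) h
  refine ⟨ψ, ?_, ?_, ?_⟩
  · ext m
    rw [← ev_single ψ x m]
    apply hψ ∅
    rintro θ ⟨rfl, -⟩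
    rw [ev_single]
  · intro y hy hR
    ext m
    rw [← ev_single ψ y m]
    apply hψ {y}
    rintro θ ⟨-, hθ⟩
    rw [ev_single, hθ.1 y ⟨hy, by simp⟩ hR]
  · intro a b hab ha hb hR m
    have := hψ {a, b} (DFinsupp.single b (M.map hab m) - DFinsupp.single a m) 0 (by
      rintro θ ⟨-, hθ⟩
      rw [map_sub, ev_single, ev_single, hθ.2 a b hab ⟨ha, by simp⟩ ⟨hb, by simp⟩ hR, sub_self])
    rw [map_sub, ev_single, ev_single] at this
    exact sub_eq_zero.mp this

theorem compact_sec (hfd : ∀ p, FiniteDimensional k (M.V p)) (A R : Set P) (x : P) (u : M.V x)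
    (h : ∀ S : Finset P, ∃ v : ∀ y, M.V y, v x = u ∧ IsSec M (A ∩ S) R v) :
    ∃ v, v x = u ∧ IsSec M A R v := by
  classical
  let E : ∀ y, M.V y ≃ₗ[k] Module.Dual k (Module.Dual k (M.V y)) :=
    fun y => Module.evalEquiv k (M.V y)
  have hE : ∀ y (Φ : Module.Dual k (Module.Dual k (M.V y))) (θ : Module.Dual k (M.V y)),
      Φ θ = θ ((E y).symm Φ) := by
    intro y Φ θ
    obtain ⟨m, rfl⟩ := (E y).surjective Φ
    simp [E]
  have hext : ∀ y (m n : M.V y), (∀ θ : Module.Dual k (M.V y), θ m = θ n) → m = n := by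
    intro y m n hmn
    apply (E y).injective
    ext θ
    simpa [E] using hmn θ
  obtain ⟨Ψ, hΨ⟩ := lin_compact (V := fun y => Module.Dual k (M.V y))
    (fun S Ψ => (fun y => (E y).symm (Ψ y)) x = u ∧
      IsSec M (A ∩ S) R (fun y => (E y).symm (Ψ y)))
    (fun S T ψ hST h => ⟨h.1, h.2.mono (Set.inter_subset_inter_right _ (by exact_mod_cast hST))⟩)
    (by
      intro S
      obtain ⟨v, h1, h2⟩ := h S
      exact ⟨fun y => E y (v y), by simpa using h1, by simpa using h2⟩)
  refine ⟨fun y => (E y).symm (Ψ y), ?_, ?_, ?_⟩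
  · apply hext
    intro θ
    rw [← hE, ← ev_single Ψ x θ]
    apply hΨ ∅
    rintro Φ ⟨rfl, -⟩
    rw [ev_single, hE]
  · intro y hy hR
    apply hext
    intro θ
    rw [← hE, ← ev_single Ψ y θ]
    apply hΨ {y}
    rintro Φ ⟨-, hΦ⟩
    rw [ev_single, hE]
    exact congrArg θ (hΦ.1 y ⟨hy, by simp⟩ hR)
  · intro a b hab ha hb hR
    apply hext
    intro θ
    have := hΨ {a, b} (DFinsupp.single a (θ.comp (M.map hab)) - DFinsupp.single b θ) 0 (by
      rintro Φ ⟨-, hΦ⟩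
      rw [map_sub, ev_single, ev_single, hE, hE, LinearMap.comp_apply,
        hΦ.2 a b hab ⟨ha, by simp⟩ ⟨hb, by simp⟩ hR, sub_self])
    rw [map_sub, ev_single, ev_single, hE, hE, LinearMap.comp_apply] at this
    exact sub_eq_zero.mp this

/-- The ray to the right of `x`. -/
def Ray (τ : P ≃ ℝ) (x : P) : Set P := {y | τ x ≤ τ y}

theorem exists_top (S : Finset P) (R : Set P) (x : P) (hx : x ∈ R) :
    ∃ y ∈ R, ∀ a ∈ R, a ∈ S → τ a ≤ τ y := by
  classical
  obtain ⟨y, hy, h⟩ := Finset.exists_max_image (insert x (S.filter (· ∈ R))) τ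
    ⟨x, Finset.mem_insert_self _ _⟩
  refine ⟨y, ?_, fun a ha haS => h a (by simp [ha, haS])⟩
  simp only [Finset.mem_insert, Finset.mem_filter] at hy
  rcases hy with rfl | hy
  exacts [hx, hy.2]

theorem exists_bot (S : Finset P) (R : Set P) (x : P) (hx : x ∈ R) :
    ∃ y ∈ R, ∀ a ∈ R, a ∈ S → τ y ≤ τ a := by
  classical
  obtain ⟨y, hy, h⟩ := Finset.exists_min_image (insert x (S.filter (· ∈ R))) τ
    ⟨x, Finset.mem_insert_self _ _⟩
  refine ⟨y, ?_, fun a ha haS => h a (by simp [ha, haS])⟩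
  simp only [Finset.mem_insert, Finset.mem_filter] at hy
  rcases hy with rfl | hy
  exacts [hx, hy.2]

/-- `R` is an initial segment of the ray from `x`. -/
structure Init (τ : P ≃ ℝ) (x : P) (R : Set P) : Prop where
  mem : x ∈ R
  sub : R ⊆ Ray τ x
  conv : ∀ y z, y ∈ R → τ x ≤ τ z → τ z ≤ τ y → z ∈ R

theorem Init.lt {x : P} {R : Set P} (hR : Init τ x R) {y z : P} (hy : y ∈ R) (hz : z ∈ Ray τ x)
    (hzR : z ∉ R) : τ y < τ z := by
  by_contra h
  exact hzR (hR.conv y z hy hz (not_lt.mp h))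

theorem secD (hfd : ∀ p, FiniteDimensional k (M.V p)) {x : P} {R : Set P}
    (hR : Init τ x R) (hex : ∀ a b : P, a ≤ b → a ∈ R → b ∈ Ray τ x → b ∈ R) (u : M.V x)
    (hu : ∀ y ∈ R, u ∈ F τ M x y ⊤) : ∃ v, v x = u ∧ IsSec M (Ray τ x) R v := by
  classical
  apply compact_sec hfd
  intro S
  obtain ⟨y, hy, hmax⟩ := exists_top (τ := τ) S R x hR.mem
  obtain ⟨v, hv, hvx, -⟩ := hu y hy
  have hs : ∀ a ∈ R, a ∈ S → a ∈ Seg τ x y := fun a ha haS => ⟨hR.sub ha, hmax a ha haS⟩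
  refine ⟨fun y => if y ∈ R then v y else 0, by simp [hR.mem, hvx], ?_, ?_⟩
  · intro z _ hz; simp [hz]
  · intro a b hab ha hb haR
    have hbR := hex a b hab haR hb.1
    simp only [haR, hbR, if_true]
    exact hv.2 a b hab (hs a haR ha.2) (hs b hbR hb.2) trivial

theorem secK (hz : Zig τ) (hfd : ∀ p, FiniteDimensional k (M.V p)) {x : P} {R : Set P}
    (hR : Init τ x R) {z₀ : P} (hz₀ : z₀ ∈ Ray τ x) (hz₀R : z₀ ∉ R) (u : M.V x)
    (hu : ∀ z ∈ Ray τ x, z ∉ R → u ∈ F τ M x z ⊥) : ∃ v, v x = u ∧ IsSec M (Ray τ x) R v := by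
  classical
  apply compact_sec hfd
  intro S
  obtain ⟨z, hzz, hmin⟩ := exists_bot (τ := τ) S (Ray τ x \ R) z₀ ⟨hz₀, hz₀R⟩
  obtain ⟨v, hv, hvx, hv0⟩ := hu z hzz.1 hzz.2
  have hv0 : v z = 0 := hv0
  have hs : ∀ a ∈ R, a ∈ Seg τ x z := fun a ha => ⟨hR.sub ha, (hR.lt ha hzz.1 hzz.2).le⟩
  refine ⟨fun y => if y ∈ R then v y else 0, by simp [hR.mem, hvx], ?_, ?_⟩
  · intro z _ hz; simp [hz]
  · intro a b hab ha hb haR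
    by_cases hbR : b ∈ R
    · simp only [haR, hbR, if_true]
      exact hv.2 a b hab (hs a haR) (hs b hbR) trivial
    · simp only [haR, hbR, if_true, if_false]
      obtain ⟨h1, h2⟩ := hz.btw a b z hab (hs a haR).2 (hmin b ⟨hb.1, hbR⟩ hb.2)
      rw [← map_map h1 h2, hv.2 a z h1 (hs a haR) (right_mem_seg hzz.1) trivial, hv0, map_zero]

theorem cosecK (hz : Zig τ) {x : P} {R : Set P}
    (hR : Init τ x R) (hen : ∀ a b : P, a ≤ b → b ∈ R → a ∈ Ray τ x → a ∈ R)
    (φ : Module.Dual k (M.V x)) (hφ : ∀ y ∈ R, ∀ u ∈ F τ M x y ⊥, φ u = 0) :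
    ∃ ψ, ψ x = φ ∧ IsCosec M (Ray τ x) R ψ := by
  classical
  apply compact_cosec
  intro S
  obtain ⟨y, hy, hmax⟩ := exists_top (τ := τ) S R x hR.mem
  obtain ⟨v, hv, hvx, -⟩ := dual hz (hR.sub hy) ⊥ φ (hφ y hy)
  have hs : ∀ a ∈ R, a ∈ S → a ∈ Seg τ x y := fun a ha haS => ⟨hR.sub ha, hmax a ha haS⟩
  refine ⟨fun y => if y ∈ R then v y else 0, by simp [hR.mem, hvx], ?_, ?_⟩
  · intro z _ hz; simp [hz]
  · intro a b hab ha hb hbR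
    have haR := hen a b hab hbR ha.1
    simp only [haR, hbR, if_true]
    exact hv.2 a b hab (hs a haR ha.2) (hs b hbR hb.2) trivial

theorem cosecD (hz : Zig τ) {x : P} {R : Set P}
    (hR : Init τ x R) {z₀ : P} (hz₀ : z₀ ∈ Ray τ x) (hz₀R : z₀ ∉ R)
    (φ : Module.Dual k (M.V x)) (hφ : ∀ z ∈ Ray τ x, z ∉ R → ∀ u ∈ F τ M x z ⊤, φ u = 0) :
    ∃ ψ, ψ x = φ ∧ IsCosec M (Ray τ x) R ψ := by
  classical
  apply compact_cosec
  intro S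
  obtain ⟨z, hzz, hmin⟩ := exists_bot (τ := τ) S (Ray τ x \ R) z₀ ⟨hz₀, hz₀R⟩
  obtain ⟨v, hv, hvx, hv0⟩ := dual hz hzz.1 ⊤ φ (hφ z hzz.1 hzz.2)
  have hs : ∀ a ∈ R, a ∈ Seg τ x z := fun a ha => ⟨hR.sub ha, (hR.lt ha hzz.1 hzz.2).le⟩
  refine ⟨fun y => if y ∈ R then v y else 0, by simp [hR.mem, hvx], ?_, ?_⟩
  · intro z _ hz; simp [hz]
  · intro a b hab ha hb hbR m
    by_cases haR : a ∈ R
    · simp only [haR, hbR, if_true]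
      exact hv.2 a b hab (hs a haR) (hs b hbR) trivial m
    · simp only [haR, hbR, if_true, if_false]
      obtain ⟨h1, h2⟩ := hz.btw' a b z hab (hs b hbR).2 (hmin a ⟨ha.1, haR⟩ ha.2)
      rw [← map_map h1 h2, hv.2 z b h2 (right_mem_seg hzz.1) (hs b hbR) trivial,
        hv0 _ trivial]
      rfl

theorem K_mono (hz : Zig τ) {x y y' : P} (h1 : τ x ≤ τ y) (h2 : τ y ≤ τ y') :
    F τ M x y ⊥ ≤ F τ M x y' ⊥ := by
  refine le_trans ?_ (F_comp hz h1 h2 ⊥)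
  rintro u ⟨v, hv, rfl, hv0⟩
  have hv0 : v y = 0 := hv0
  exact ⟨v, hv, rfl, by rw [hv0]; exact Submodule.zero_mem _⟩

theorem seg_sub {x y y' : P} (h2 : τ y ≤ τ y') : Seg τ x y ⊆ Seg τ x y' :=
  fun _ ha => ⟨ha.1, ha.2.trans h2⟩

theorem D_anti {x y y' : P} (h2 : τ y ≤ τ y') : F τ M x y' ⊤ ≤ F τ M x y ⊤ := by
  rintro u ⟨v, hv, rfl, -⟩
  exact ⟨v, hv.mono (seg_sub h2), rfl, trivial⟩

theorem K_back {x y y' : P} (h1 : τ x ≤ τ y) (h2 : τ y ≤ τ y') (h : y' ≤ y) :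
    F τ M x y' ⊥ ≤ F τ M x y ⊥ := by
  rintro u ⟨v, hv, rfl, hv0⟩
  have hv0 : v y' = 0 := hv0
  refine ⟨v, hv.mono (seg_sub h2), rfl, ?_⟩
  have := hv.2 y' y h (right_mem_seg (h1.trans h2)) ⟨h1, h2⟩ trivial
  rw [hv0, map_zero] at this
  exact this.symm

theorem D_fwd (hz : Zig τ) {x y y' : P} (h1 : τ x ≤ τ y) (h2 : τ y ≤ τ y') (h : y ≤ y') :
    F τ M x y ⊤ ≤ F τ M x y' ⊤ := by
  refine le_trans ?_ (F_comp hz h1 h2 ⊤)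
  rintro u ⟨v, hv, rfl, -⟩
  exact ⟨v, hv, rfl, secFrom M y (v y),
    secFrom_isSec y (v y) (fun a ha => (hz.btw y y' a h ha.1 ha.2).1), secFrom_self _ _, trivial⟩

theorem one_sided (hz : Zig τ) (hfd : ∀ p, FiniteDimensional k (M.V p)) (x : P)
    (U : Submodule k (M.V x)) (hU : U ≠ ⊥) :
    ∃ (R : Set P) (V Q : Submodule k (M.V x)), Init τ x R ∧ V ⊓ U ≠ ⊥ ∧ Q ⊓ U = ⊥ ∧
      (∀ u ∈ V, ∃ v, v x = u ∧ IsSec M (Ray τ x) R v) ∧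
      (∀ φ : Module.Dual k (M.V x), (∀ q ∈ Q, φ q = 0) →
        ∃ ψ, ψ x = φ ∧ IsCosec M (Ray τ x) R ψ) := by
  have hKc : ∀ a ∈ Ray τ x, ∀ b ∈ Ray τ x,
      F τ M x a ⊥ ≤ F τ M x b ⊥ ∨ F τ M x b ⊥ ≤ F τ M x a ⊥ := by
    intro a ha b hb
    rcases le_total (τ a) (τ b) with h | h
    · exact Or.inl (K_mono hz ha h)
    · exact Or.inr (K_mono hz hb h)
  have hDc : ∀ a ∈ Ray τ x, ∀ b ∈ Ray τ x,
      F τ M x a ⊤ ≤ F τ M x b ⊤ ∨ F τ M x b ⊤ ≤ F τ M x a ⊤ := by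
    intro a ha b hb
    rcases le_total (τ a) (τ b) with h | h
    · exact Or.inr (D_anti h)
    · exact Or.inl (D_anti h)
  have hxR : x ∈ Ray τ x := le_refl (τ x)
  have hKx : F τ M x x ⊥ = ⊥ := by
    rw [eq_bot_iff]
    rintro u ⟨v, -, rfl, h⟩
    exact h
  have hDx : F τ M x x ⊤ = ⊤ := by
    rw [eq_top_iff]
    rintro u -
    refine ⟨secFrom M x u, secFrom_isSec x u ?_, secFrom_self x u, trivial⟩
    intro a ha
    obtain rfl : x = a := τ.injective (le_antisymm ha.1 ha.2)
    exact le_rfl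
  by_cases c1 : ∃ z ∈ Ray τ x, F τ M x z ⊥ ⊓ U ≠ ⊥
  · obtain ⟨z₁, hz₁, hz₁U⟩ := c1
    let R : Set P := {y | y ∈ Ray τ x ∧ F τ M x y ⊥ ⊓ U = ⊥}
    have hR : Init τ x R := by
      refine ⟨⟨hxR, by rw [hKx, bot_inf_eq]⟩, fun y hy => hy.1, fun y z hy h1 h2 => ⟨h1, ?_⟩⟩
      rw [eq_bot_iff, ← hy.2]
      exact inf_le_inf_right U (K_mono hz h1 h2)
    have hz₁R : z₁ ∉ R := fun h => hz₁U h.2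
    obtain ⟨y₀, hy₀, hmax⟩ := exists_greatest (fun y => F τ M x y ⊥) R ⟨x, hR.mem⟩
      (fun a ha b hb => hKc a ha.1 b hb.1)
    obtain ⟨z₀, hz₀, hmin⟩ := exists_least (fun y => F τ M x y ⊥) (Ray τ x \ R) ⟨z₁, hz₁, hz₁R⟩
      (fun a ha b hb => hKc a ha.1 b hb.1)
    refine ⟨R, F τ M x z₀ ⊥, F τ M x y₀ ⊥, hR, fun h => hz₀.2 ⟨hz₀.1, h⟩, hy₀.2, ?_, ?_⟩
    · intro u hu
      exact secK hz hfd hR hz₁ hz₁R u (fun z h1 h2 => hmin z ⟨h1, h2⟩ hu)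
    · intro φ hφ
      refine cosecK hz hR ?_ φ (fun y hy u hu => hφ u (hmax y hy hu))
      intro a b hab hb ha
      by_contra haR
      have hlt := hR.lt hb ha haR
      apply haR
      refine ⟨ha, ?_⟩
      rw [eq_bot_iff, ← hb.2]
      exact inf_le_inf_right U (K_back hb.1 hlt.le hab)
  push Not at c1
  by_cases c2 : ∃ z ∈ Ray τ x, F τ M x z ⊤ ⊓ U = ⊥
  · obtain ⟨z₁, hz₁, hz₁U⟩ := c2
    let R : Set P := {y | y ∈ Ray τ x ∧ F τ M x y ⊤ ⊓ U ≠ ⊥}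
    have hR : Init τ x R := by
      refine ⟨⟨hxR, by rw [hDx, top_inf_eq]; exact hU⟩, fun y hy => hy.1,
        fun y z hy h1 h2 => ⟨h1, fun h => hy.2 ?_⟩⟩
      rw [eq_bot_iff, ← h]
      exact inf_le_inf_right U (D_anti h2)
    have hz₁R : z₁ ∉ R := fun h => h.2 hz₁U
    obtain ⟨y₀, hy₀, hmin⟩ := exists_least (fun y => F τ M x y ⊤) R ⟨x, hR.mem⟩
      (fun a ha b hb => hDc a ha.1 b hb.1)
    obtain ⟨z₀, hz₀, hmax⟩ := exists_greatest (fun y => F τ M x y ⊤) (Ray τ x \ R)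
      ⟨z₁, hz₁, hz₁R⟩ (fun a ha b hb => hDc a ha.1 b hb.1)
    refine ⟨R, F τ M x y₀ ⊤, F τ M x z₀ ⊤, hR, hy₀.2, ?_, ?_, ?_⟩
    · by_contra h
      exact hz₀.2 ⟨hz₀.1, h⟩
    · intro u hu
      refine secD hfd hR ?_ u (fun y hy => hmin y hy hu)
      intro a b hab ha hb
      by_contra hbR
      have hlt := hR.lt ha hb hbR
      apply hbR
      refine ⟨hb, fun h => ha.2 ?_⟩
      rw [eq_bot_iff, ← h]
      exact inf_le_inf_right U (D_fwd hz ha.1 hlt.le hab)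
    · intro φ hφ
      exact cosecD hz hR hz₁ hz₁R φ (fun z h1 h2 u hu => hφ u (hmax z ⟨h1, h2⟩ hu))
  push Not at c2
  have hR : Init τ x (Ray τ x) := ⟨hxR, fun _ h => h, fun _ _ _ h _ => h⟩
  obtain ⟨y₀, hy₀, hmin⟩ := exists_least (fun y => F τ M x y ⊤) (Ray τ x) ⟨x, hxR⟩ hDc
  obtain ⟨z₀, hz₀, hmax⟩ := exists_greatest (fun y => F τ M x y ⊥) (Ray τ x) ⟨x, hxR⟩ hKc
  refine ⟨Ray τ x, F τ M x y₀ ⊤, F τ M x z₀ ⊥, hR, c2 y₀ hy₀, c1 z₀ hz₀, ?_, ?_⟩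
  · intro u hu
    exact secD hfd hR (fun _ _ _ _ h => h) u (fun y hy => hmin y hy hu)
  · intro φ hφ
    exact cosecK hz hR (fun _ _ _ _ h => h) φ (fun y hy u hu => hφ u (hmax y hy hu))

end
end PMod.ZZ

namespace PMod.ZZ
open PMod

section
variable {k : Type} [Field k] {P : Type} [Preorder P] {τ : P ≃ ℝ}
  {M : PersistenceModule k P}

theorem IsSec.congr {A R R' : Set P} {v : ∀ y, M.V y} (h : IsSec M A R v)
    (hR : ∀ y ∈ A, (y ∈ R ↔ y ∈ R')) : IsSec M A R' v :=
  ⟨fun y hy hy' => h.1 y hy (fun h' => hy' ((hR y hy).1 h')),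
    fun a b hab ha hb haR => h.2 a b hab ha hb ((hR a ha).2 haR)⟩

theorem IsCosec.congr {A R R' : Set P} {v : ∀ y, Module.Dual k (M.V y)} (h : IsCosec M A R v)
    (hR : ∀ y ∈ A, (y ∈ R ↔ y ∈ R')) : IsCosec M A R' v :=
  ⟨fun y hy hy' => h.1 y hy (fun h' => hy' ((hR y hy).1 h')),
    fun a b hab ha hb haR => h.2 a b hab ha hb ((hR b hb).2 haR)⟩

theorem conn_aux (hz : Zig τ) {I : Set P}
    (hI : ∀ p ∈ I, ∀ q ∈ I, ∀ z, τ p ≤ τ z → τ z ≤ τ q → z ∈ I) {p q : P} (hp : p ∈ I)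
    (hq : q ∈ I) (hpq : τ p ≤ τ q) :
    ∃ (n : ℕ) (r : ℕ → P), r 0 = p ∧ r n = q ∧ (∀ i ≤ n, r i ∈ I) ∧
      ∀ i < n, r i ≤ r (i + 1) ∨ r (i + 1) ≤ r i := by
  obtain ⟨n, hn⟩ := exists_nat_ge (τ q - ⌊τ p⌋)
  have hf1 := Int.floor_le (τ p)
  have hf2 := Int.lt_floor_add_one (τ p)
  let ρ : ℕ → ℝ := fun i => max (τ p) (min (τ q) (⌊τ p⌋ + i))
  have hρ : ∀ i, τ (τ.symm (ρ i)) = ρ i := fun i => by simp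
  refine ⟨n, fun i => τ.symm (ρ i), ?_, ?_, ?_, ?_⟩
  · have : ρ 0 = τ p := by
      apply max_eq_left
      exact (min_le_right _ _).trans (by simpa using hf1)
    simp [this]
  · have : ρ n = τ q := by
      simp only [ρ]
      rw [min_eq_left (by linarith), max_eq_right hpq]
    simp [this]
  · intro i _
    apply hI p hp q hq
    · rw [hρ]; exact le_max_left _ _
    · rw [hρ]; exact max_le hpq (min_le_left _ _)
  · intro i _
    have hle : ρ i ≤ ρ (i + 1) := by
      apply max_le_max le_rfl
      apply min_le_min le_rfl
      push_cast; linarith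
    rcases le_total (τ q) (⌊τ p⌋ + i) with h | h
    · have h1 : ρ i = ρ (i + 1) := by
        simp only [ρ]
        rw [min_eq_left h, min_eq_left (by push_cast; linarith)]
      left
      show τ.symm (ρ i) ≤ τ.symm (ρ (i + 1))
      rw [h1]
    · have h1 : ((⌊τ p⌋ + i : ℤ) : ℝ) ≤ ρ i := by
        push_cast
        exact le_trans (le_min h le_rfl) (le_max_right _ _)
      have h2 : ρ (i + 1) ≤ ((⌊τ p⌋ + i : ℤ) : ℝ) + 1 := by
        push_cast
        apply max_le
        · have : (0 : ℝ) ≤ i := Nat.cast_nonneg i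
          linarith
        · refine (min_le_right _ _).trans ?_
          push_cast; linarith
      rcases hz.seg (⌊τ p⌋ + i) with h3 | h3
      · left
        apply h3
        · rw [hρ]; exact h1
        · rw [hρ, hρ]; exact hle
        · rw [hρ]; exact h2
      · right
        apply h3
        · rw [hρ]; exact h1
        · rw [hρ, hρ]; exact hle
        · rw [hρ]; exact h2

theorem isInterval_of (hz : Zig τ) {I : Set P} (hne : I.Nonempty)
    (hI : ∀ p ∈ I, ∀ q ∈ I, ∀ z, τ p ≤ τ z → τ z ≤ τ q → z ∈ I) : IsInterval I := by
  refine ⟨hne, ?_, ?_⟩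
  · intro a c b hac hcb ha hb
    rcases le_total (τ a) (τ c) with h1 | h1 <;> rcases le_total (τ c) (τ b) with h2 | h2
    · exact hI a ha b hb c h1 h2
    · rcases le_total (τ a) (τ b) with h3 | h3
      · rw [hz.anti c b hcb (hz.btw a c b hac h3 h2).2]; exact hb
      · rw [← hz.anti a c hac (hz.btw' c b a hcb h3 h1).1]; exact ha
    · rcases le_total (τ a) (τ b) with h3 | h3
      · rw [← hz.anti a c hac (hz.btw c b a hcb h1 h3).1]; exact ha
      · rw [hz.anti c b hcb (hz.btw' a c b hac h2 h3).2]; exact hb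
    · exact hI b hb a ha c h2 h1
  · intro p hp q hq
    rcases le_total (τ p) (τ q) with h | h
    · exact conn_aux hz hI hp hq h
    · apply conn_aux hz.neg _ hp hq (by simpa using h)
      intro p hp q hq z h1 h2
      simp only [Equiv.trans_apply, Equiv.neg_apply, neg_le_neg_iff] at h1 h2
      exact hI q hq p hp z h2 h1

theorem summand (hz : Zig τ) (hfd : ∀ p, FiniteDimensional k (M.V p)) (x : P) (m : M.V x)
    (hm : m ≠ 0) : ∃ (I : Set P) (v : ∀ y, M.V y) (φ : ∀ y, Module.Dual k (M.V y)),
      x ∈ I ∧ IsInterval I ∧ IsSec M Set.univ I v ∧ IsCosec M Set.univ I φ ∧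
      ∀ y ∈ I, φ y (v y) = 1 := by
  have htop : (⊤ : Submodule k (M.V x)) ≠ ⊥ := by
    intro h
    have : m ∈ (⊤ : Submodule k (M.V x)) := trivial
    rw [h] at this
    exact hm this
  obtain ⟨L, VL, QL, iL, hVL, hQL, sL, cL⟩ := one_sided hz.neg hfd x ⊤ htop
  rw [inf_top_eq] at hVL hQL
  obtain ⟨R, VR, QR, iR, hVR, hQR, sR, cR⟩ := one_sided hz hfd x VL hVL
  obtain ⟨u, ⟨huR, huL⟩, hu0⟩ := Submodule.exists_mem_ne_zero_of_ne_bot hVR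
  have huQ : u ∉ QR := by
    intro h
    have : u ∈ QR ⊓ VL := ⟨h, huL⟩
    rw [hQR] at this
    exact hu0 this
  obtain ⟨f, hfu, hfQ⟩ := Submodule.exists_le_ker_of_notMem huQ
  let φ : Module.Dual k (M.V x) := (f u)⁻¹ • f
  have hφu : φ u = 1 := by simp [φ, hfu]
  have hφQ : ∀ q ∈ QR, φ q = 0 := by
    intro q hq
    have : f q = 0 := hfQ hq
    simp [φ, this]
  obtain ⟨v₁, hv₁x, hv₁⟩ := sL u huL
  obtain ⟨v₂, hv₂x, hv₂⟩ := sR u huR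
  obtain ⟨φ₁, hφ₁x, hφ₁⟩ := cL φ (by
    rw [hQL]; rintro q hq
    rw [(Submodule.mem_bot k).1 hq, map_zero])
  obtain ⟨φ₂, hφ₂x, hφ₂⟩ := cR φ hφQ
  have rL : ∀ y, y ∈ Ray (τ.trans (Equiv.neg ℝ)) x ↔ τ y ≤ τ x := by
    intro y; simp [Ray]
  have rR : ∀ y, y ∈ Ray τ x ↔ τ x ≤ τ y := fun y => Iff.rfl
  have hU : Ray (τ.trans (Equiv.neg ℝ)) x ∪ Ray τ x = Set.univ := by
    ext y
    simp only [Set.mem_union, rL, rR, Set.mem_univ, iff_true]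
    exact le_total _ _
  have e1 : ∀ y ∈ Ray (τ.trans (Equiv.neg ℝ)) x, (y ∈ L ↔ y ∈ L ∪ R) := by
    intro y hy
    refine ⟨Or.inl, ?_⟩
    rintro (h | h)
    · exact h
    · obtain rfl : y = x := τ.injective (le_antisymm ((rL y).1 hy) (iR.sub h))
      exact iL.mem
  have e2 : ∀ y ∈ Ray τ x, (y ∈ R ↔ y ∈ L ∪ R) := by
    intro y hy
    refine ⟨Or.inr, ?_⟩
    rintro (h | h)
    · obtain rfl : y = x := τ.injective (le_antisymm ((rL y).1 (iL.sub h)) hy)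
      exact iR.mem
    · exact h
  obtain ⟨v, -, hv2, hv⟩ := glueSec hz (t := x) (fun a ha => (rL a).1 ha) (fun a ha => (rR a).1 ha)
    ((rL x).2 le_rfl) ((rR x).2 le_rfl) (Or.inl iL.mem) (hv₁x.trans hv₂x.symm)
    (hv₁.congr e1) (hv₂.congr e2)
  obtain ⟨ψ, -, hψ2, hψ⟩ := glueCosec hz (t := x) (fun a ha => (rL a).1 ha)
    (fun a ha => (rR a).1 ha)
    ((rL x).2 le_rfl) ((rR x).2 le_rfl) (Or.inl iL.mem) (hφ₁x.trans hφ₂x.symm)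
    (hφ₁.congr e1) (hφ₂.congr e2)
  rw [hU] at hv hψ
  have hIvl : IsInterval (L ∪ R) := by
    apply isInterval_of hz ⟨x, Or.inl iL.mem⟩
    intro p hp q hq z h1 h2
    rcases le_total (τ x) (τ z) with h | h
    · right
      apply iR.conv q z _ h h2
      exact (e2 q (h.trans h2)).2 hq
    · left
      apply iL.conv p z _ (by simpa using h) (by simpa using h1)
      exact (e1 p ((rL p).2 (h1.trans h))).2 hp
  refine ⟨L ∪ R, v, ψ, Or.inl iL.mem, hIvl, hv, hψ, ?_⟩
  have step : ∀ a b : P, a ≤ b → a ∈ L ∪ R → b ∈ L ∪ R → ψ a (v a) = ψ b (v b) := by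
    intro a b hab ha hb
    rw [← hv.2 a b hab trivial trivial ha, hψ.2 a b hab trivial trivial hb]
  intro y hy
  obtain ⟨n, r, hr0, hrn, hrI, hr⟩ := hIvl.2.2 x (Or.inl iL.mem) y hy
  have hall : ∀ i ≤ n, ψ (r i) (v (r i)) = 1 := by
    intro i
    induction i with
    | zero =>
      intro _
      rw [hr0, hv2 x ((rR x).2 le_rfl), hψ2 x ((rR x).2 le_rfl), hv₂x, hφ₂x, hφu]
    | succ i ih =>
      intro hi
      rw [← ih (by omega)]
      rcases hr i (by omega) with h | h
      · exact (step _ _ h (hrI i (by omega)) (hrI (i + 1) hi)).symm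
      · exact step _ _ h (hrI (i + 1) hi) (hrI i (by omega))
  have := hall n le_rfl
  rwa [hrn] at this

/-- A submodule of `M` isomorphic to an interval module. -/
structure Gen (M : PersistenceModule k P) where
  I : Set P
  v : ∀ y, M.V y
  int : IsInterval I
  sec : IsSec M Set.univ I v
  ne : ∀ y ∈ I, v y ≠ 0

/-- The generators in `S` alive at `y`. -/
def alive (S : Set (Gen M)) (y : P) : Set (Gen M) := {g | g ∈ S ∧ y ∈ g.I}

/-- A partial decomposition of `M`. -/
structure St (M : PersistenceModule k P) where
  S : Set (Gen M)
  C : ∀ y, Submodule k (M.V y)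
  sub : ∀ a b (h : a ≤ b) m, m ∈ C a → M.map h m ∈ C b
  ind : ∀ y, LinearIndepOn k (fun g : Gen M => g.v y) (alive S y)
  cpl : ∀ y, IsCompl (Submodule.span k ((fun g : Gen M => g.v y) '' alive S y)) (C y)

/-- The extension relation of partial decompositions. -/
def St.r (s t : St M) : Prop := s.S ⊆ t.S ∧ ∀ y, t.C y ≤ s.C y

/-- The trivial partial decomposition. -/
def St.start (M : PersistenceModule k P) : St M where
  S := ∅
  C := fun _ => ⊤
  sub := fun _ _ _ _ _ => trivial
  ind := fun y => by
    have : alive (∅ : Set (Gen M)) y = ∅ := by ext; simp [alive]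
    rw [this]; exact linearIndepOn_empty _ _
  cpl := fun y => by
    have : alive (∅ : Set (Gen M)) y = ∅ := by ext; simp [alive]
    rw [this]; simpa using isCompl_bot_top

theorem alive_mono {S T : Set (Gen M)} (h : S ⊆ T) (y : P) : alive S y ⊆ alive T y :=
  fun _ hg => ⟨h hg.1, hg.2⟩

theorem chain_bound (hfd : ∀ p, FiniteDimensional k (M.V p)) (c : Set (St M))
    (hc : IsChain St.r c) : ∃ ub, ∀ a ∈ c, St.r a ub := by
  rcases c.eq_empty_or_nonempty with rfl | hne
  · exact ⟨St.start M, fun a ha => absurd ha (Set.notMem_empty a)⟩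
  have htot : ∀ a ∈ c, ∀ b ∈ c, St.r a b ∨ St.r b a := by
    intro a ha b hb
    by_cases h : a = b
    · subst h; exact Or.inl ⟨subset_rfl, fun _ => le_rfl⟩
    · exact hc ha hb h
  have hne' : Nonempty c := hne.to_subtype
  have hun : ∀ y, alive (⋃ s : c, s.1.S) y = ⋃ s : c, alive s.1.S y := by
    intro y; ext g; simp only [alive, Set.mem_iUnion, Set.mem_setOf_eq]; tauto
  have hdir : ∀ y, Directed (· ⊆ ·) (fun s : c => alive s.1.S y) := by
    intro y a b
    rcases htot a.1 a.2 b.1 b.2 with h | h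
    · exact ⟨b, alive_mono h.1 y, subset_rfl⟩
    · exact ⟨a, subset_rfl, alive_mono h.1 y⟩
  refine ⟨⟨⋃ s : c, s.1.S, fun y => ⨅ s : c, s.1.C y, ?_, ?_, ?_⟩, ?_⟩
  · intro a b h m hm
    rw [Submodule.mem_iInf] at hm ⊢
    exact fun s => s.1.sub a b h m (hm s)
  · intro y
    rw [hun]
    exact linearIndepOn_iUnion_of_directed (hdir y) (fun s => s.1.ind y)
  · intro y
    obtain ⟨s₀, hs₀, hmin⟩ := exists_least (fun s : St M => s.C y) c hne (by
      intro a ha b hb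
      rcases htot a ha b hb with h | h
      · exact Or.inr (h.2 y)
      · exact Or.inl (h.2 y))
    have hC : (⨅ s : c, s.1.C y) = s₀.C y :=
      le_antisymm (iInf_le (fun s : c => s.1.C y) ⟨s₀, hs₀⟩) (le_iInf fun s => hmin s.1 s.2)
    rw [hC, hun, Set.image_iUnion, Submodule.span_iUnion]
    constructor
    · rw [Submodule.disjoint_def]
      intro m hm hm'
      rw [Submodule.mem_iSup_of_directed _ (by
        intro a b
        obtain ⟨d, h1, h2⟩ := hdir y a b
        exact ⟨d, Submodule.span_mono (Set.image_mono h1),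
          Submodule.span_mono (Set.image_mono h2)⟩)] at hm
      obtain ⟨s, hs⟩ := hm
      exact (Submodule.disjoint_def.1 (s.1.cpl y).disjoint) m hs (hmin s.1 s.2 hm')
    · rw [codisjoint_iff_le_sup, ← (s₀.cpl y).sup_eq_top]
      exact sup_le_sup_right (le_iSup (fun s : c =>
        Submodule.span k ((fun g : Gen M => g.v y) '' alive s.1.S y)) ⟨s₀, hs₀⟩) _
  · intro a ha
    exact ⟨Set.subset_iUnion (fun s : c => s.1.S) ⟨a, ha⟩,
      fun y => iInf_le (fun s : c => s.1.C y) ⟨a, ha⟩⟩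

/-- The complement as a persistence module. -/
def St.mod (s : St M) : PersistenceModule k P where
  V y := s.C y
  map {x y} h := (M.map h).restrict (s.sub x y h)
  map_refl x := by
    ext m
    simp [map_self]
  map_trans {x y z} hxy hyz := by
    ext m
    simp [map_map hxy hyz (hxy.trans hyz)]

theorem extend (hz : Zig τ) (hfd : ∀ p, FiniteDimensional k (M.V p)) (s : St M) (x : P)
    (hx : s.C x ≠ ⊥) : ∃ t : St M, St.r s t ∧ ¬ St.r t s := by
  obtain ⟨m, hmC, hm⟩ := Submodule.exists_mem_ne_zero_of_ne_bot hx
  have hfd' : ∀ p, FiniteDimensional k (s.mod.V p) := fun p => by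
    change FiniteDimensional k (s.C p); infer_instance
  obtain ⟨I, v, φ, hxI, hI, hv, hφ, h1⟩ := summand (M := s.mod) hz hfd' x (⟨m, hmC⟩ : s.C x)
    (fun h => hm (congrArg Subtype.val h))
  let w : ∀ y, M.V y := fun y => (s.C y).subtype (v y)
  have hwC : ∀ y, w y ∈ s.C y := fun y => (show s.C y from v y).2
  let φ' : ∀ y, s.C y →ₗ[k] k := fun y => φ y
  have hw1 : ∀ y ∈ I, φ' y ⟨w y, hwC y⟩ = 1 := h1
  have hw0 : ∀ y ∈ I, w y ≠ 0 := by
    intro y hy h0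
    have h2 := hw1 y hy
    have : (⟨w y, hwC y⟩ : s.C y) = 0 := Subtype.ext h0
    rw [this, map_zero] at h2
    exact zero_ne_one h2
  let g₀ : Gen M := ⟨I, w, hI, ⟨fun y _ hy => congrArg Subtype.val (hv.1 y trivial hy),
    fun a b hab _ _ ha => congrArg Subtype.val (hv.2 a b hab trivial trivial ha)⟩, hw0⟩
  have hal1 : ∀ y ∈ I, alive (insert g₀ s.S) y = insert g₀ (alive s.S y) := by
    intro y hy
    ext g
    simp only [alive, Set.mem_insert_iff, Set.mem_ofPred_eq]
    constructor
    · rintro ⟨h | h, h'⟩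
      exacts [Or.inl h, Or.inr ⟨h, h'⟩]
    · rintro (h | h)
      · exact ⟨Or.inl h, by rw [h]; exact hy⟩
      · exact ⟨Or.inr h.1, h.2⟩
  have hal0 : ∀ y, y ∉ I → alive (insert g₀ s.S) y = alive s.S y := by
    intro y hy
    ext g
    simp only [alive, Set.mem_insert_iff, Set.mem_ofPred_eq]
    constructor
    · rintro ⟨h | h, h'⟩
      · rw [h] at h'; exact absurd h' hy
      · exact ⟨h, h'⟩
    · exact fun h => ⟨Or.inr h.1, h.2⟩
  have hns : ∀ y ∈ I, w y ∉ Submodule.span k ((fun g : Gen M => g.v y) '' alive s.S y) :=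
    fun y hy h => hw0 y hy (Submodule.disjoint_def.1 (s.cpl y).disjoint _ h (hwC y))
  let C' : ∀ y, Submodule k (M.V y) := fun y => (LinearMap.ker (φ' y)).map (s.C y).subtype
  have hC' : ∀ y m, m ∈ C' y ↔ ∃ h : m ∈ s.C y, φ' y ⟨m, h⟩ = 0 := by
    intro y m
    simp [C']
  have hC0 : ∀ y, y ∉ I → C' y = s.C y := by
    intro y hy
    ext m
    rw [hC']
    refine ⟨fun h => h.1, fun h => ⟨h, ?_⟩⟩
    have : φ' y = 0 := hφ.1 y trivial hy
    rw [this]; rfl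
  let t : St M := {
    S := insert g₀ s.S
    C := C'
    sub := by
      intro a b hab m hm
      rw [hC'] at hm ⊢
      obtain ⟨hm, hm0⟩ := hm
      refine ⟨s.sub a b hab m hm, ?_⟩
      by_cases hb : b ∈ I
      · have := hφ.2 a b hab trivial trivial hb (⟨m, hm⟩ : s.C a)
        exact this.trans hm0
      · have : φ' b = 0 := hφ.1 b trivial hb
        rw [this]; rfl
    ind := by
      intro y
      by_cases hy : y ∈ I
      · rw [hal1 y hy]
        exact (s.ind y).insert (hns y hy)
      · rw [hal0 y hy]; exact s.ind y
    cpl := by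
      intro y
      by_cases hy : y ∈ I
      · rw [hal1 y hy, Set.image_insert_eq, Submodule.span_insert]
        constructor
        · rw [Submodule.disjoint_def]
          intro m hm hmC
          obtain ⟨a, ha, b, hb, rfl⟩ := Submodule.mem_sup.1 hm
          obtain ⟨α, rfl⟩ := Submodule.mem_span_singleton.1 ha
          obtain ⟨h2, h3⟩ := (hC' y _).1 hmC
          have hαC : α • w y ∈ s.C y := (s.C y).smul_mem α (hwC y)
          have hbC : b ∈ s.C y := by
            have := (s.C y).sub_mem h2 hαC
            simpa [g₀] using this
          have hb0 : b = 0 := Submodule.disjoint_def.1 (s.cpl y).disjoint _ hb hbC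
          subst hb0
          have h4 : (⟨α • g₀.v y + 0, h2⟩ : s.C y) = α • ⟨w y, hwC y⟩ := by
            apply Subtype.ext; simp [g₀]
          rw [h4, map_smul, hw1 y hy, smul_eq_mul, mul_one] at h3
          simp [h3]
        · rw [codisjoint_iff_le_sup, ← (s.cpl y).sup_eq_top]
          apply sup_le
          · exact le_sup_of_le_left le_sup_right
          · intro c hc
            have h5 : c = φ' y ⟨c, hc⟩ • w y + (c - φ' y ⟨c, hc⟩ • w y) := by abel
            rw [h5]
            apply Submodule.add_mem_sup
            · exact Submodule.mem_sup_left (Submodule.mem_span_singleton.2 ⟨_, rfl⟩)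
            · rw [hC']
              refine ⟨(s.C y).sub_mem hc ((s.C y).smul_mem _ (hwC y)), ?_⟩
              have h6 : (⟨c - φ' y ⟨c, hc⟩ • w y,
                  (s.C y).sub_mem hc ((s.C y).smul_mem _ (hwC y))⟩ : s.C y) =
                  ⟨c, hc⟩ - φ' y ⟨c, hc⟩ • ⟨w y, hwC y⟩ := rfl
              rw [h6, map_sub, map_smul, hw1 y hy, smul_eq_mul, mul_one, sub_self]
      · rw [hal0 y hy, hC0 y hy]; exact s.cpl y }
  refine ⟨t, ⟨Set.subset_insert _ _, fun y m hm => ((hC' y m).1 hm).1⟩, fun h => ?_⟩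
  have h7 : g₀ ∈ s.S := h.1 (Set.mem_insert _ _)
  exact hns x hxI (Submodule.subset_span ⟨g₀, ⟨h7, hxI⟩, rfl⟩)

theorem exists_full (hz : Zig τ) (hfd : ∀ p, FiniteDimensional k (M.V p)) :
    ∃ s : St M, ∀ y, s.C y = ⊥ := by
  obtain ⟨s, hs⟩ := exists_maximal_of_chains_bounded (r := St.r (M := M)) (chain_bound hfd)
    (fun h1 h2 => ⟨h1.1.trans h2.1, fun y => (h2.2 y).trans (h1.2 y)⟩)
  refine ⟨s, fun y => ?_⟩
  by_contra h
  obtain ⟨t, h1, h2⟩ := extend hz hfd s y h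
  exact h2 (hs t h1)

open Classical in
/-- The comparison map at `y`. -/
noncomputable def Psi (S : Set (Gen M)) (y : P) :
    (Π₀ g : S, kMod k g.1.I y) →ₗ[k] M.V y :=
  DFinsupp.lsum k (fun g : S =>
    (LinearMap.toSpanSingleton k (M.V y) (g.1.v y)).comp (kMod k g.1.I y).subtype)

open Classical in
theorem Psi_single (S : Set (Gen M)) (y : P) (g : S) (c : kMod k g.1.I y) :
    Psi S y (DFinsupp.single g c) = (c : k) • g.1.v y := by
  simp [Psi]

open Classical in
/-- Coefficients of an element of the direct sum. -/
noncomputable def Lam (S : Set (Gen M)) (y : P) :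
    (Π₀ g : S, kMod k g.1.I y) →ₗ[k] (Gen M →₀ k) :=
  DFinsupp.lsum k (fun g : S => (Finsupp.lsingle g.1).comp (kMod k g.1.I y).subtype)

theorem Lam_apply (S : Set (Gen M)) (y : P) (f : Π₀ g : S, kMod k g.1.I y) (g : S) :
    Lam S y f g.1 = (f g : k) := by
  classical
  have : (Finsupp.lapply g.1).comp (Lam S y) =
      (kMod k g.1.I y).subtype.comp (DFinsupp.lapply g) := by
    apply DFinsupp.lhom_ext
    intro g' c
    by_cases h : g' = g
    · subst h; simp [Lam]
    · have h' : g'.1 ≠ g.1 := fun e => h (Subtype.ext e)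
      simp [Lam, Finsupp.single_apply, h', DFinsupp.single_apply, h]
  exact LinearMap.congr_fun this f

theorem Lam_apply_out (S : Set (Gen M)) (y : P) (f : Π₀ g : S, kMod k g.1.I y) (g : Gen M)
    (hg : g ∉ S) : Lam S y f g = 0 := by
  classical
  have : (Finsupp.lapply g).comp (Lam S y) = (0 : _ →ₗ[k] k) := by
    apply DFinsupp.lhom_ext
    intro g' c
    have h' : g'.1 ≠ g := fun e => hg (e ▸ g'.2)
    simp [Lam, Finsupp.single_apply, h']
  exact LinearMap.congr_fun this f

theorem Psi_eq (S : Set (Gen M)) (y : P) (f : Π₀ g : S, kMod k g.1.I y) :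
    Psi S y f = Finsupp.linearCombination k (fun g : Gen M => g.v y) (Lam S y f) := by
  classical
  have : Psi S y = (Finsupp.linearCombination k (fun g : Gen M => g.v y)).comp (Lam S y) := by
    apply DFinsupp.lhom_ext
    intro g' c
    simp [Psi_single, Lam]
  exact LinearMap.congr_fun this f

theorem Psi_inj (s : St M) (y : P) : Function.Injective (Psi s.S y) := by
  rw [injective_iff_map_eq_zero]
  intro f hf
  rw [Psi_eq] at hf
  have h0 := linearIndepOn_iff.1 (s.ind y) (Lam s.S y f) (by
    rw [Finsupp.mem_supported']
    intro g hg
    by_cases hgS : g ∈ s.S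
    · have hy : y ∉ g.I := fun h => hg ⟨hgS, h⟩
      rw [Lam_apply s.S y f ⟨g, hgS⟩]
      exact kMod_coe_eq_zero k hy _
    · exact Lam_apply_out s.S y f g hgS) hf
  ext g
  rw [← Lam_apply, h0]
  rfl

theorem Psi_surj (s : St M) (hs : ∀ y, s.C y = ⊥) (y : P) :
    Function.Surjective (Psi s.S y) := by
  classical
  rw [← LinearMap.range_eq_top, eq_top_iff, ← (s.cpl y).sup_eq_top, hs y, sup_bot_eq,
    Submodule.span_le]
  rintro _ ⟨g, hg, rfl⟩
  refine ⟨DFinsupp.single (⟨g, hg.1⟩ : s.S) (kGen k hg.2), ?_⟩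
  rw [Psi_single]
  simp [kGen]

theorem Psi_nat (S : Set (Gen M)) {a b : P} (h : a ≤ b) (f : Π₀ g : S, kMod k g.1.I a) :
    M.map h (Psi S a f) =
      Psi S b (DFinsupp.mapRange.linearMap (fun g : S => intervalMap k g.1.I h) f) := by
  classical
  have : (M.map h).comp (Psi S a) =
      (Psi S b).comp (DFinsupp.mapRange.linearMap (fun g : S => intervalMap k g.1.I h)) := by
    apply DFinsupp.lhom_ext
    intro g c
    simp only [LinearMap.comp_apply, DFinsupp.mapRange.linearMap_apply, DFinsupp.mapRange_single,
      Psi_single, map_smul]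
    by_cases ha : a ∈ g.1.I
    · rw [g.1.sec.2 a b h trivial trivial ha]
      by_cases hb : b ∈ g.1.I
      · simp [intervalMap, hb]
      · rw [g.1.sec.1 b trivial hb, smul_zero, smul_zero]
    · have hc : c = 0 := Subtype.ext (kMod_coe_eq_zero k ha c)
      rw [hc, map_zero]
      simp
  exact LinearMap.congr_fun this f

theorem main (hz : Zig τ) (hfd : ∀ p, FiniteDimensional k (M.V p)) :
    ∃ (ι : Type) (I : ι → Set P) (hI : ∀ i, IsInterval (I i)),
      Isomorphic M (directSum fun i => intervalModule k (I i) ((hI i).2.1)) := by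
  obtain ⟨s, hs⟩ := exists_full (M := M) hz hfd
  refine ⟨s.S, fun g => g.1.I, fun g => g.1.int, ?_⟩
  let E : ∀ y, (Π₀ g : s.S, kMod k g.1.I y) ≃ₗ[k] M.V y := fun y =>
    LinearEquiv.ofBijective (Psi s.S y) ⟨Psi_inj s y, Psi_surj s hs y⟩
  refine ⟨⟨fun y => (E y).symm.toLinearMap, ?_⟩, fun y => (E y).symm.bijective⟩
  intro a b h
  apply LinearMap.ext
  intro m
  obtain ⟨f, rfl⟩ := (E a).surjective m
  apply (E b).injective
  have h1 := Psi_nat s.S h f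
  change E b (DFinsupp.mapRange.linearMap (fun g : s.S => intervalMap k g.1.I h)
    ((E a).symm (E a f))) = E b ((E b).symm (M.map h (E a f)))
  rw [LinearEquiv.symm_apply_apply, LinearEquiv.apply_symm_apply]
  exact h1.symm

end

theorem zig_exists (γ : ℤ → ℤ × ℤ) (hγ : IsZigzagPath γ) : ∃ τ : ↥(Zset γ) ≃ ℝ, Zig τ := by
  obtain ⟨hstep, -, -⟩ := hγ
  -- the path is monotone
  have hst : ∀ i : ℤ, ((γ (i + 1)).1 = (γ i).1 + 1 ∧ (γ (i + 1)).2 = (γ i).2) ∨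
      ((γ (i + 1)).1 = (γ i).1 ∧ (γ (i + 1)).2 = (γ i).2 - 1) := by
    intro i
    rcases hstep i with h | h <;> rw [h] <;> simp
  have hm1 : Monotone (fun i => (γ i).1) := by
    apply monotone_int_of_le_succ
    intro i; rcases hst i with h | h <;> omega
  have hm2 : Antitone (fun i => (γ i).2) := by
    apply antitone_int_of_succ_le
    intro i; rcases hst i with h | h <;> omega
  let c : ℤ := (γ 0).1 - (γ 0).2
  have hc : ∀ i : ℤ, (γ i).1 - (γ i).2 = c + i := by
    intro i
    induction i using Int.induction_on with
    | zero => simp [c]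
    | succ i ih => rcases hst i with h | h <;> omega
    | pred i ih =>
      have h0 : (-(i : ℤ) - 1 + 1) = -i := by ring
      have := hst (-i - 1)
      rw [h0] at this
      rcases this with h | h <;> omega
  have hcR : ∀ i : ℤ, ((γ i).1 : ℝ) - (γ i).2 = c + i := fun i => by exact_mod_cast hc i
  let f : ↥(Zset γ) → ℝ := fun p => p.1.1 - p.1.2 - c
  -- location of points
  have hloc : ∀ p : ↥(Zset γ), ∃ i : ℤ, ((γ i).1 : ℝ) ≤ p.1.1 ∧ p.1.1 ≤ (γ (i + 1)).1 ∧
      ((γ (i + 1)).2 : ℝ) ≤ p.1.2 ∧ p.1.2 ≤ (γ i).2 := by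
    rintro ⟨⟨s, t⟩, i, h⟩
    refine ⟨i, ?_⟩
    have h1 : ((γ i).1 : ℝ) ≤ (γ (i + 1)).1 := by exact_mod_cast hm1 (by omega : i ≤ i + 1)
    have h2 : ((γ (i + 1)).2 : ℝ) ≤ (γ i).2 := by exact_mod_cast hm2 (by omega : i ≤ i + 1)
    simp only [Prod.mk_le_mk] at h
    rcases h with ⟨⟨a, b⟩, d, e⟩ | ⟨⟨a, b⟩, d, e⟩ <;> refine ⟨?_, ?_, ?_, ?_⟩ <;> simp only <;>
      linarith
  have hmono : ∀ p q : ↥(Zset γ), f p ≤ f q → p.1.1 ≤ q.1.1 ∧ q.1.2 ≤ p.1.2 := by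
    intro p q h
    simp only [f] at h
    obtain ⟨i, i1, i2, i3, i4⟩ := hloc p
    obtain ⟨j, j1, j2, j3, j4⟩ := hloc q
    rcases lt_trichotomy i j with hij | rfl | hij
    · have h1 : ((γ (i + 1)).1 : ℝ) ≤ (γ j).1 := by exact_mod_cast hm1 (by omega : i + 1 ≤ j)
      have h2 : ((γ j).2 : ℝ) ≤ (γ (i + 1)).2 := by exact_mod_cast hm2 (by omega : i + 1 ≤ j)
      constructor <;> linarith
    · rcases hst i with ⟨h1, h2⟩ | ⟨h1, h2⟩
      · rw [h2] at i3 j3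
        constructor <;> linarith
      · rw [h1] at i2 j2
        constructor <;> linarith
    · have h1 : ((γ (j + 1)).1 : ℝ) ≤ (γ i).1 := by exact_mod_cast hm1 (by omega : j + 1 ≤ i)
      have h2 : ((γ i).2 : ℝ) ≤ (γ (j + 1)).2 := by exact_mod_cast hm2 (by omega : j + 1 ≤ i)
      constructor <;> linarith
  have hinj : Function.Injective f := by
    intro p q h
    have h1 := hmono p q h.le
    have h2 := hmono q p h.ge
    exact Subtype.ext (Prod.ext (le_antisymm h1.1 h2.1) (le_antisymm h2.2 h1.2))
  have hsurj : Function.Surjective f := by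
    intro r
    have h1 := Int.floor_le r
    have h2 := Int.lt_floor_add_one r
    have h3 := hcR ⌊r⌋
    rcases hst ⌊r⌋ with ⟨e1, e2⟩ | ⟨e1, e2⟩
    · refine ⟨⟨((γ ⌊r⌋).1 + (r - ⌊r⌋), (γ ⌊r⌋).2), ⌊r⌋, Or.inl ?_⟩, ?_⟩
      · rw [e1, e2]; push_cast
        simp only [Prod.mk_le_mk]
        refine ⟨⟨?_, ?_⟩, ?_, ?_⟩ <;> linarith
      · simp only [f]; linarith
    · refine ⟨⟨((γ ⌊r⌋).1, (γ ⌊r⌋).2 - (r - ⌊r⌋)), ⌊r⌋, Or.inr ?_⟩, ?_⟩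
      · rw [e1, e2]; push_cast
        simp only [Prod.mk_le_mk]
        refine ⟨⟨?_, ?_⟩, ?_, ?_⟩ <;> linarith
      · simp only [f]; linarith
  refine ⟨Equiv.ofBijective f ⟨hinj, hsurj⟩, ?_, ?_, ?_, ?_⟩
  · intro a b h1 h2
    exact le_antisymm h1 h2
  · intro a b d hab h1 h2
    have m1 := hmono a d h1
    have m2 := hmono d b h2
    have hab' : a.1.1 ≤ b.1.1 ∧ a.1.2 ≤ b.1.2 := hab
    constructor
    · change a.1.1 ≤ d.1.1 ∧ a.1.2 ≤ d.1.2
      constructor <;> linarith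
    · change d.1.1 ≤ b.1.1 ∧ d.1.2 ≤ b.1.2
      constructor <;> linarith
  · intro a b d hab h1 h2
    have m1 := hmono b d h1
    have m2 := hmono d a h2
    have hab' : a.1.1 ≤ b.1.1 ∧ a.1.2 ≤ b.1.2 := hab
    constructor
    · change a.1.1 ≤ d.1.1 ∧ a.1.2 ≤ d.1.2
      constructor <;> linarith
    · change d.1.1 ≤ b.1.1 ∧ d.1.2 ≤ b.1.2
      constructor <;> linarith
  · intro i
    -- the vertices as points of the poset
    have hv : ∀ j : ℤ, (((γ j).1 : ℝ), ((γ j).2 : ℝ)) ∈ Zset γ := by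
      intro j
      refine ⟨j, ?_⟩
      rcases hst j with ⟨e1, e2⟩ | ⟨e1, e2⟩
      · left
        rw [e1, e2]; push_cast
        simp only [Prod.mk_le_mk]
        refine ⟨⟨?_, ?_⟩, ?_, ?_⟩ <;> linarith
      · right
        rw [e1, e2]; push_cast
        simp only [Prod.mk_le_mk]
        refine ⟨⟨?_, ?_⟩, ?_, ?_⟩ <;> linarith
    have hfv : ∀ j : ℤ, f ⟨_, hv j⟩ = j := by
      intro j
      have := hcR j
      simp only [f]; linarith
    have key : ∀ a b : ↥(Zset γ), (i : ℝ) ≤ f a → f a ≤ f b → f b ≤ i + 1 →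
        (γ i).1 ≤ a.1.1 ∧ a.1.1 ≤ b.1.1 ∧ b.1.1 ≤ (γ (i + 1)).1 ∧
        a.1.2 ≤ (γ i).2 ∧ b.1.2 ≤ a.1.2 ∧ (γ (i + 1)).2 ≤ b.1.2 := by
      intro a b h1 h2 h3
      have m1 := hmono ⟨_, hv i⟩ a (by rw [hfv]; exact h1)
      have m2 := hmono a b h2
      have m3 := hmono b ⟨_, hv (i + 1)⟩ (by rw [hfv]; push_cast; exact h3)
      exact ⟨m1.1, m2.1, m3.1, m1.2, m2.2, m3.2⟩
    rcases hst i with ⟨e1, e2⟩ | ⟨e1, e2⟩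
    · left
      intro a b h1 h2 h3
      obtain ⟨k1, k2, k3, k4, k5, k6⟩ := key a b h1 h2 h3
      rw [e2] at k6
      change a.1.1 ≤ b.1.1 ∧ a.1.2 ≤ b.1.2
      constructor <;> linarith
    · right
      intro a b h1 h2 h3
      obtain ⟨k1, k2, k3, k4, k5, k6⟩ := key a b h1 h2 h3
      rw [e1] at k3
      change b.1.1 ≤ a.1.1 ∧ b.1.2 ≤ a.1.2
      constructor <;> linarith

end PMod.ZZ

open PMod in
/-- Corollary 4.7: pointwise finite-dimensional persistence modules over a zigzag
subposet of `ℝ²` decompose into interval modules. -/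
theorem stmt17 {k : Type} [Field k] (γ : ℤ → ℤ × ℤ) (hγ : IsZigzagPath γ)
    (M : PersistenceModule k ↥(Zset γ)) (hfd : ∀ p, FiniteDimensional k (M.V p)) :
    ∃ (ι : Type) (I : ι → Set ↥(Zset γ)) (hI : ∀ i, IsInterval (I i)),
      Isomorphic M (directSum fun i => intervalModule k (I i) ((hI i).2.1)) := by
  obtain ⟨τ, hz⟩ := PMod.ZZ.zig_exists γ hγ
  exact PMod.ZZ.main hz hfd
end

section
/- Let k be a field and M : ℝ² → Vec_k a persistence module such that for every (i,j) ∈ ℤ² the restriction of M to the square [i, i+1] × [j, j+1] is middle exact. Then M is middle exact on all of ℝ². -/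
namespace PMod

/-- Exactness in the middle of the sequence attached to the rectangle with corners
`(x,y)`, `(x,y')`, `(x',y)`, `(x',y')` in `ℝ²`. -/
def RectExact {k : Type} [Field k] (M : PersistenceModule k (ℝ × ℝ))
    (x x' y y' : ℝ) (hx : x ≤ x') (hy : y ≤ y') : Prop :=
  ∀ (mb : M.V (x, y')) (mc : M.V (x', y)),
    M.map (show ((x, y') : ℝ × ℝ) ≤ (x', y') from ⟨hx, le_refl y'⟩) mb =
      M.map (show ((x', y) : ℝ × ℝ) ≤ (x', y') from ⟨le_refl x', hy⟩) mc →
    ∃ ma : M.V (x, y),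
      M.map (show ((x, y) : ℝ × ℝ) ≤ (x, y') from ⟨le_refl x, hy⟩) ma = mb ∧
      M.map (show ((x, y) : ℝ × ℝ) ≤ (x', y) from ⟨hx, le_refl y⟩) ma = mc

end PMod

namespace PMod

theorem map_map_aux {k : Type} [Field k] (M : PersistenceModule k (ℝ × ℝ))
    {p q r : ℝ × ℝ} (h1 : p ≤ q) (h2 : q ≤ r) (v : M.V p) :
    M.map h2 (M.map h1 v) = M.map (le_trans h1 h2) v := by
  rw [M.map_trans h1 h2]; rfl

theorem RectExact.glue_x {k : Type} [Field k] {M : PersistenceModule k (ℝ × ℝ)}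
    {x m x' y y' : ℝ} {h1 : x ≤ m} {h2 : m ≤ x'} {hy : y ≤ y'}
    (H1 : RectExact M x m y y' h1 hy) (H2 : RectExact M m x' y y' h2 hy) :
    RectExact M x x' y y' (h1.trans h2) hy := by
  intro mb mc h
  obtain ⟨n, hn1, hn2⟩ := H2
    (M.map (show ((x, y') : ℝ × ℝ) ≤ (m, y') from ⟨h1, le_refl y'⟩) mb) mc
    (by rw [map_map_aux]; exact h)
  obtain ⟨a, ha1, ha2⟩ := H1 mb n hn1.symm
  refine ⟨a, ha1, ?_⟩
  rw [← hn2, ← ha2, map_map_aux]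

theorem RectExact.glue_y {k : Type} [Field k] {M : PersistenceModule k (ℝ × ℝ)}
    {x x' y m y' : ℝ} {h1 : y ≤ m} {h2 : m ≤ y'} {hx : x ≤ x'}
    (H1 : RectExact M x x' y m hx h1) (H2 : RectExact M x x' m y' hx h2) :
    RectExact M x x' y y' hx (h1.trans h2) := by
  intro mb mc h
  obtain ⟨n, hn1, hn2⟩ := H2 mb
    (M.map (show ((x', y) : ℝ × ℝ) ≤ (x', m) from ⟨le_refl x', h1⟩) mc)
    (by rw [map_map_aux]; exact h)
  obtain ⟨a, ha1, ha2⟩ := H1 n mc hn2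
  refine ⟨a, ?_, ha2⟩
  rw [← hn1, ← ha1, map_map_aux]

/-- A transitive property of closed intervals that holds inside unit integer intervals
holds for every interval. -/
theorem interval_induction (P : ∀ x x' : ℝ, x ≤ x' → Prop)
    (glue : ∀ (x m x' : ℝ) (h1 : x ≤ m) (h2 : m ≤ x'), P x m h1 → P m x' h2 →
      P x x' (h1.trans h2))
    (loc : ∀ (i : ℤ) (x x' : ℝ) (h : x ≤ x'), (i : ℝ) ≤ x → x' ≤ (i : ℝ) + 1 → P x x' h) :
    ∀ (x x' : ℝ) (h : x ≤ x'), P x x' h := by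
  have key : ∀ (n : ℕ) (x x' : ℝ) (h : x ≤ x'), x' ≤ (⌊x⌋ : ℝ) + 1 + n → P x x' h := by
    intro n
    induction n with
    | zero =>
      intro x x' h hx
      exact loc ⌊x⌋ x x' h (Int.floor_le x) (by simpa using hx)
    | succ n ih =>
      intro x x' h hx
      push_cast at hx
      by_cases hc : x' ≤ (⌊x⌋ : ℝ) + 1 + n
      · exact ih x x' h hc
      · have hm : x ≤ (⌊x⌋ : ℝ) + 1 + n := by
          have := Int.lt_floor_add_one x
          have := Nat.cast_nonneg (α := ℝ) n
          linarith
        refine glue x ((⌊x⌋ : ℝ) + 1 + n) x' hm (not_le.mp hc).le (ih _ _ hm le_rfl) ?_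
        refine loc (⌊x⌋ + 1 + n) _ _ _ ?_ ?_
        · push_cast; exact le_rfl
        · push_cast; linarith
  intro x x' h
  obtain ⟨n, hn⟩ := exists_nat_ge (x' - ((⌊x⌋ : ℝ) + 1))
  exact key n x x' h (by linarith)

end PMod

open PMod in
/-- Lemma 4.8: a persistence module over `ℝ²` which is middle exact on each unit
square with integer corners is middle exact. -/
theorem stmt18 {k : Type} [Field k] (M : PersistenceModule k (ℝ × ℝ))
    (hloc : ∀ (i j : ℤ) (x x' y y' : ℝ) (hx : x ≤ x') (hy : y ≤ y'),
      (i : ℝ) ≤ x → x' ≤ (i : ℝ) + 1 → (j : ℝ) ≤ y → y' ≤ (j : ℝ) + 1 →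
      RectExact M x x' y y' hx hy) :
    ∀ (x x' y y' : ℝ) (hx : x ≤ x') (hy : y ≤ y'), RectExact M x x' y y' hx hy := by
  intro x x' y y' hx hy
  refine interval_induction (fun x x' hx => RectExact M x x' y y' hx hy)
    (fun _ _ _ _ _ H1 H2 => H1.glue_x H2) ?_ x x' hx
  intro i x x' hx hi hi'
  exact interval_induction (fun y y' hy => RectExact M x x' y y' hx hy)
    (fun _ _ _ _ _ H1 H2 => H1.glue_y H2)
    (fun j y y' hy hj hj' => hloc i j x x' y y' hx hy hi hi' hj hj') y y' hy
end
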